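/- arXiv:2310.14582 — 2 statements merged into one kernel-verified Lean document; each statement's English description precedes it below -/
import Mathlib

section
/- Let (B, φ, φ′) be an infinitesimal noncommutative probability space and let b₁, b₂ ∈ B be infinitesimally free. For i = 1, 2 set mᵢ(n) := φ(bᵢⁿ) (so mᵢ(0) = 1), let (tᵢ(n))_{n≥0} be the inverse Markov–Krein transform of (mᵢ(n))_{n≥0}, and assume φ′(bᵢⁿ) = mᵢ(n) − tᵢ(n) for all n ≥ 1. Set m(n) := φ((b₁ + b₂)ⁿ) and let (t(n))_{n≥0} be the inverse Markov–Krein transform of (m(n))_{n≥0}. Then φ′((b₁ + b₂)ⁿ) = m(n) − t(n) for all n ≥ 1. (This expresses the identity (μ₁, μ₁ − τ₁) ⊞ (μ₂, μ₂ − τ₂) = (μ, μ − τ) for the infinitesimal free additive convolution, where μ = μ₁ ⊞ μ₂ and τ, τᵢ are the inverse Markov–Krein transforms of μ, μᵢ.) -/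
open scoped BigOperators

namespace TypeBPrime

variable {B : Type*} [Ring B] [Algebra ℂ B]

/-- The alternating word `a 0 * (f 0 * a 1) * ⋯ * (f (n-1) * a n)`. -/
def altWord {n : ℕ} (a : Fin (n + 1) → B) (f : Fin n → B) : B :=
  a 0 * (List.ofFn fun k : Fin n => f k * a k.succ).prod

/-- Cyclic-antimonotone independence of the pair `(A₁, F₁)` with respect to `(φ, Φ)`:
`Φ(a₀ f₁ a₁ ⋯ fₙ aₙ) = φ(a₀ aₙ) · φ(a₁) ⋯ φ(a_{n-1}) · Φ(f₁ ⋯ fₙ)` for all `n ≥ 1`. -/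
def CyclicAntimonotone (φ Φ : B → ℂ) (A₁ F₁ : Set B) : Prop :=
  ∀ n : ℕ, 0 < n → ∀ (a : Fin (n + 1) → B) (f : Fin n → B),
    (∀ k, a k ∈ A₁) → (∀ k, f k ∈ F₁) →
    Φ (altWord a f) =
      φ (a 0 * a (Fin.last n)) *
        (∏ k ∈ Finset.Ioo (0 : Fin (n + 1)) (Fin.last n), φ (a k)) *
        Φ (List.ofFn f).prod

/-- Freeness of a family of subsets with respect to `φ`:
alternating words in centered elements are centered. -/
def IsFreeFamily {ι : Type*} (φ : B → ℂ) (Alg : ι → Set B) : Prop :=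
  ∀ (n : ℕ) (idx : Fin (n + 1) → ι) (a : Fin (n + 1) → B),
    (∀ k : Fin n, idx k.castSucc ≠ idx k.succ) →
    (∀ k, a k ∈ Alg (idx k)) → (∀ k, φ (a k) = 0) →
    φ (List.ofFn a).prod = 0

/-- Infinitesimal freeness of a family of subsets with respect to `(φ, φ')`. -/
def IsInfFree {ι : Type*} (φ φ' : B → ℂ) (Alg : ι → Set B) : Prop :=
  IsFreeFamily φ Alg ∧
  (∀ (n : ℕ) (idx : Fin (n + 1) → ι) (b : Fin (n + 1) → B),
    (∀ k : Fin n, idx k.castSucc ≠ idx k.succ) →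
    (∀ k, b k ∈ Alg (idx k)) → (∀ k, φ (b k) = 0) →
    ¬(Even n ∧ ∀ k, idx k = idx k.rev) →
    φ' (List.ofFn b).prod = 0) ∧
  (∀ (m : ℕ) (idx : Fin (2 * m + 1) → ι) (b : Fin (2 * m + 1) → B),
    (∀ k : Fin (2 * m), idx k.castSucc ≠ idx k.succ) →
    (∀ k, b k ∈ Alg (idx k)) → (∀ k, φ (b k) = 0) →
    (∀ k, idx k = idx k.rev) →
    φ' (List.ofFn b).prod =
      (∏ j : Fin m,
          φ (b (Fin.castLE (by omega) j) * b (Fin.castLE (by omega) j).rev)) *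
        φ' (b ⟨m, by omega⟩))

/-- Trivial independence with respect to `Φ`: alternating words of length `≥ 2` vanish. -/
def TrivIndep {ι : Type*} (Φ : B → ℂ) (Fj : ι → Set B) : Prop :=
  ∀ (n : ℕ) (idx : Fin (n + 2) → ι) (f : Fin (n + 2) → B),
    (∀ k : Fin (n + 1), idx k.castSucc ≠ idx k.succ) →
    (∀ k, f k ∈ Fj (idx k)) →
    Φ (List.ofFn f).prod = 0

/-- Boolean independence with respect to `ψ`. -/
def BoolIndep {ι : Type*} (ψ : B → ℂ) (C : ι → Set B) : Prop :=
  ∀ (n : ℕ) (idx : Fin (n + 1) → ι) (c : Fin (n + 1) → B),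
    (∀ k : Fin n, idx k.castSucc ≠ idx k.succ) →
    (∀ k, c k ∈ C (idx k)) →
    ψ (List.ofFn c).prod = ∏ k, ψ (c k)

/-- Conditional freeness with respect to `(φ, ψ)`. -/
def CFree {ι : Type*} (φ ψ : B → ℂ) (Alg : ι → Set B) : Prop :=
  IsFreeFamily φ Alg ∧
  ∀ (n : ℕ) (idx : Fin (n + 1) → ι) (b : Fin (n + 1) → B),
    (∀ k : Fin n, idx k.castSucc ≠ idx k.succ) →
    (∀ k, b k ∈ Alg (idx k)) → (∀ k, φ (b k) = 0) →
    ψ (List.ofFn b).prod = ∏ k, ψ (b k)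

/-- The unital subspace `ℂ·1_B + F₁`. -/
def unitize (F₁ : Set B) : Set B :=
  {x | ∃ c : ℂ, ∃ f ∈ F₁, x = algebraMap ℂ B c + f}

/-- The set of alternating words `a₀ f₁ a₁ ⋯ fₙ aₙ` with letters from `A₁` and `F₁`. -/
def wordSet (A₁ F₁ : Set B) : Set B :=
  {x | ∃ n : ℕ, 0 < n ∧ ∃ (a : Fin (n + 1) → B) (f : Fin n → B),
    (∀ k, a k ∈ A₁) ∧ (∀ k, f k ∈ F₁) ∧ x = altWord a f}

/-- `A₁⟨F₁⟩₀`: the linear span of all alternating words `a₀ f₁ a₁ ⋯ fₙ aₙ`. -/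
def wordSpan (A₁ F₁ : Set B) : Set B :=
  (Submodule.span ℂ (wordSet A₁ F₁) : Submodule ℂ B)

/-- The type B′ subalgebra `A₁⟨F₁⟩ = A₁ + A₁⟨F₁⟩₀`. -/
def typeBSub (A₁ F₁ : Set B) : Set B :=
  {x | ∃ a ∈ A₁, ∃ f ∈ wordSpan A₁ F₁, x = a + f}

/-- `(tₙ)` is the inverse Markov–Krein transform of the sequence `(mₙ)`:
`(n+1)·mₙ = Σ_{j=0}^{n} tⱼ m_{n−j}` for all `n ≥ 0`. -/
def IsInvMK (m t : ℕ → ℂ) : Prop :=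
  ∀ n : ℕ, ((n : ℂ) + 1) * m n = ∑ j ∈ Finset.range (n + 1), t j * m (n - j)

section single
open PowerSeries

/-- Coefficientwise extension of a linear functional to power series. -/
noncomputable def hat {R : Type*} [Ring R] [Algebra ℂ R] (l : R →ₗ[ℂ] ℂ) (f : R⟦X⟧) : ℂ⟦X⟧ :=
  PowerSeries.mk fun n => l (coeff n f)

section
variable {R : Type*} [Ring R] [Algebra ℂ R] (l : R →ₗ[ℂ] ℂ)

lemma coeff_hat (f : R⟦X⟧) (n : ℕ) : coeff n (hat l f) = l (coeff n f) := by
  simp [hat]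

lemma hat_add (f g : R⟦X⟧) : hat l (f + g) = hat l f + hat l g := by
  ext n; simp [coeff_hat]

lemma hat_sub (f g : R⟦X⟧) : hat l (f - g) = hat l f - hat l g := by
  ext n; simp [coeff_hat]

lemma hat_one : hat l 1 = C (l 1) := by
  ext n; simp only [coeff_hat, coeff_one, coeff_C]; split_ifs <;> simp

lemma hat_map_mul (y : ℂ⟦X⟧) (f : R⟦X⟧) :
    hat l (PowerSeries.map (algebraMap ℂ R) y * f) = y * hat l f := by
  ext n
  simp only [coeff_hat, coeff_mul, map_sum, coeff_map]
  refine Finset.sum_congr rfl fun p _ => ?_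
  rw [← Algebra.smul_def, map_smul, smul_eq_mul]

end

lemma hat_subst (l : Polynomial ℂ →ₗ[ℂ] ℂ) (u : ℂ⟦X⟧) (hu : constantCoeff u = 0)
    (f : (Polynomial ℂ)⟦X⟧) :
    hat l (f.subst (PowerSeries.map (algebraMap ℂ (Polynomial ℂ)) u)) = (hat l f).subst u := by
  have h1 : HasSubst u := HasSubst.of_constantCoeff_zero' hu
  have h2 : HasSubst (PowerSeries.map (algebraMap ℂ (Polynomial ℂ)) u) := by
    apply HasSubst.of_constantCoeff_zero'
    rw [← coeff_zero_eq_constantCoeff_apply, coeff_map, coeff_zero_eq_constantCoeff_apply, hu, map_zero]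
  ext n
  rw [coeff_hat, coeff_subst' h2, coeff_subst' h1, map_finsum l (coeff_subst_finite' h2 f n)]
  refine finsum_congr fun d => ?_
  rw [← map_pow, coeff_map, coeff_hat, smul_eq_mul, mul_comm, ← Algebra.smul_def, map_smul,
    smul_eq_mul, smul_eq_mul, mul_comm]

/-- The universal resolvent `(h - wX)⁻¹`. -/
noncomputable def resP (h : ℂ⟦X⟧) : (Polynomial ℂ)⟦X⟧ :=
  PowerSeries.map (algebraMap ℂ (Polynomial ℂ)) h⁻¹ *
    (PowerSeries.mk fun n => (Polynomial.X : Polynomial ℂ) ^ n).subst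
      (PowerSeries.map (algebraMap ℂ (Polynomial ℂ)) (X * h⁻¹))

lemma cc_u (h : ℂ⟦X⟧) : constantCoeff (X * h⁻¹) = 0 := by simp

lemma hs_u (h : ℂ⟦X⟧) : HasSubst (X * h⁻¹) := HasSubst.of_constantCoeff_zero' (cc_u h)

lemma hs_mu (h : ℂ⟦X⟧) :
    HasSubst (PowerSeries.map (algebraMap ℂ (Polynomial ℂ)) (X * h⁻¹)) := by
  apply HasSubst.of_constantCoeff_zero'
  rw [← coeff_zero_eq_constantCoeff_apply, coeff_map, coeff_zero_eq_constantCoeff_apply, cc_u,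
    map_zero]

lemma resP_mul (h : ℂ⟦X⟧) (hh : constantCoeff h = 1) :
    (PowerSeries.map (algebraMap ℂ (Polynomial ℂ)) h - X * C Polynomial.X) * resP h = 1 := by
  have hy : h * h⁻¹ = 1 := PowerSeries.mul_inv_cancel _ (by simp [hh])
  set ι := PowerSeries.map (algebraMap ℂ (Polynomial ℂ)) with hι
  have hy' : ι h * ι h⁻¹ = 1 := by rw [← map_mul, hy, map_one]
  have hX : ι (X * h⁻¹) = X * ι h⁻¹ := by rw [map_mul, hι, PowerSeries.map_X]
  set Q := PowerSeries.mk fun n => (Polynomial.X : Polynomial ℂ) ^ n with hQ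
  have hgeo : (1 - C Polynomial.X * X) * Q = 1 := by
    ext1 n
    rw [sub_mul, one_mul, mul_assoc, map_sub, coeff_C_mul]
    rcases n with _ | n
    · simp [hQ]
    · rw [coeff_succ_X_mul]; simp [hQ, pow_succ', coeff_one]
  have h3 := congrArg (fun f => f.subst (ι (X * h⁻¹))) hgeo
  rw [subst_mul (hs_mu h), subst_sub (hs_mu h), subst_mul (hs_mu h), subst_X (hs_mu h), subst_C,
    ← coe_substAlgHom (hs_mu h), map_one] at h3
  rw [coe_substAlgHom] at h3
  have h4 : (1 - C Polynomial.X * (X * ι h⁻¹)) * Q.subst (ι (X * h⁻¹)) = 1 := by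
    rw [← hX]; exact h3
  rw [resP, ← hι]
  linear_combination h4 + Q.subst (ι (X * h⁻¹)) * hy'

lemma hat_resP (l : Polynomial ℂ →ₗ[ℂ] ℂ) (h : ℂ⟦X⟧) :
    hat l (resP h) = h⁻¹ * (PowerSeries.mk fun n => l (Polynomial.X ^ n)).subst (X * h⁻¹) := by
  rw [resP, hat_map_mul, hat_subst _ _ (cc_u h)]
  congr 2; ext n; simp [coeff_hat]

lemma hat_resP_sq (l : Polynomial ℂ →ₗ[ℂ] ℂ) (h : ℂ⟦X⟧) :
    hat l (resP h * resP h) = h⁻¹ * (h⁻¹ *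
      (PowerSeries.mk fun n => ((n : ℂ) + 1) * l (Polynomial.X ^ n)).subst (X * h⁻¹)) := by
  have : resP h * resP h = PowerSeries.map (algebraMap ℂ (Polynomial ℂ)) h⁻¹ *
    (PowerSeries.map (algebraMap ℂ (Polynomial ℂ)) h⁻¹ *
    (PowerSeries.mk fun n => ((n : ℂ) + 1) • (Polynomial.X : Polynomial ℂ) ^ n).subst
      (PowerSeries.map (algebraMap ℂ (Polynomial ℂ)) (X * h⁻¹))) := by
    have hq : (PowerSeries.mk fun n => ((n : ℂ) + 1) • (Polynomial.X : Polynomial ℂ) ^ n) =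
      (PowerSeries.mk fun n => (Polynomial.X : Polynomial ℂ) ^ n) *
      (PowerSeries.mk fun n => (Polynomial.X : Polynomial ℂ) ^ n) := by
      ext1 n
      rw [coeff_mul]
      simp only [coeff_mk, ← pow_add]
      rw [Finset.sum_congr rfl (g := fun _ => (Polynomial.X : Polynomial ℂ) ^ n)
        (fun p hp => by rw [Finset.HasAntidiagonal.mem_antidiagonal.1 hp])]
      rw [Finset.sum_const, Finset.Nat.card_antidiagonal, ← Nat.cast_smul_eq_nsmul ℂ]
      push_cast; rfl
    rw [hq, subst_mul (hs_mu h), resP]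
    ring
  rw [this, hat_map_mul, hat_map_mul, hat_subst _ _ (cc_u h)]
  congr 3; ext n; simp [coeff_hat]


/-- The resolvent `(h - w b)⁻¹`. -/
noncomputable def res (b : B) (h : ℂ⟦X⟧) : B⟦X⟧ :=
  PowerSeries.map (Polynomial.aeval b : Polynomial ℂ →ₐ[ℂ] B).toRingHom (resP h)

lemma coeff_res_mem (b : B) (h : ℂ⟦X⟧) (n : ℕ) : coeff n (res b h) ∈ Algebra.adjoin ℂ {b} := by
  rw [res, coeff_map]
  exact Polynomial.aeval_mem_adjoin_singleton ℂ b

lemma map_V (b : B) (h : ℂ⟦X⟧) :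
    PowerSeries.map (Polynomial.aeval b : Polynomial ℂ →ₐ[ℂ] B).toRingHom
      (PowerSeries.map (algebraMap ℂ (Polynomial ℂ)) h - X * C Polynomial.X) =
    PowerSeries.map (algebraMap ℂ B) h - X * C b := by
  rw [map_sub, map_mul, PowerSeries.map_X, PowerSeries.map_C]
  congr 1
  · ext n; simp [coeff_map]
  · simp

lemma V_mul_res (b : B) (h : ℂ⟦X⟧) (hh : constantCoeff h = 1) :
    (PowerSeries.map (algebraMap ℂ B) h - X * C b) * res b h = 1 := by
  rw [← map_V, res, ← map_mul, resP_mul h hh, map_one]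

lemma res_mul_V (b : B) (h : ℂ⟦X⟧) (hh : constantCoeff h = 1) :
    res b h * (PowerSeries.map (algebraMap ℂ B) h - X * C b) = 1 := by
  rw [← map_V, res, ← map_mul, mul_comm, resP_mul h hh, map_one]

lemma cc_res (b : B) (h : ℂ⟦X⟧) (hh : constantCoeff h = 1) : constantCoeff (res b h) = 1 := by
  have := congrArg constantCoeff (V_mul_res b h hh)
  rw [map_mul, map_sub, map_mul, constantCoeff_X, zero_mul, sub_zero,
    ← coeff_zero_eq_constantCoeff_apply, coeff_map, coeff_zero_eq_constantCoeff_apply, hh] at this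
  simpa using this

lemma hat_map (l : B →ₗ[ℂ] ℂ) (b : B) (f : (Polynomial ℂ)⟦X⟧) :
    hat l (PowerSeries.map (Polynomial.aeval b : Polynomial ℂ →ₐ[ℂ] B).toRingHom f) =
      hat (l ∘ₗ (Polynomial.aeval b : Polynomial ℂ →ₐ[ℂ] B).toLinearMap) f := by
  ext n; simp [coeff_hat, coeff_map]

lemma hat_res (l : B →ₗ[ℂ] ℂ) (b : B) (h : ℂ⟦X⟧) :
    hat l (res b h) = h⁻¹ * (PowerSeries.mk fun n => l (b ^ n)).subst (X * h⁻¹) := by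
  rw [res, hat_map, hat_resP]; simp

lemma hat_res_sq (l : B →ₗ[ℂ] ℂ) (b : B) (h : ℂ⟦X⟧) :
    hat l (res b h * res b h) = h⁻¹ * (h⁻¹ *
      (PowerSeries.mk fun n => ((n : ℂ) + 1) * l (b ^ n)).subst (X * h⁻¹)) := by
  rw [res, ← map_mul, hat_map, hat_resP_sq]; simp

lemma subst_of_hat_one (l : B →ₗ[ℂ] ℂ) (b : B) (h : ℂ⟦X⟧) (hh : constantCoeff h = 1)
    (h1 : hat l (res b h) = 1) :
    (PowerSeries.mk fun n => l (b ^ n)).subst (X * h⁻¹) = h := by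
  have hy : h * h⁻¹ = 1 := PowerSeries.mul_inv_cancel _ (by simp [hh])
  rw [hat_res] at h1
  linear_combination h * h1 - (PowerSeries.mk fun n => l (b ^ n)).subst (X * h⁻¹) * hy

/-- The second moment of the resolvent in terms of the derivative of the series. -/
lemma sq_mul_D (l : B →ₗ[ℂ] ℂ) (b : B) (h : ℂ⟦X⟧) (hh : constantCoeff h = 1)
    (h1 : hat l (res b h) = 1) :
    hat l (res b h * res b h) * (h - X * derivative ℂ h) = 1 := by
  have hy : h * h⁻¹ = 1 := PowerSeries.mul_inv_cancel _ (by simp [hh])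
  have hS := subst_of_hat_one l b h hh h1
  set M := PowerSeries.mk fun n => l (b ^ n) with hM
  have hN : (PowerSeries.mk fun n => ((n : ℂ) + 1) * l (b ^ n)) = derivative ℂ (X * M) := by
    ext n
    rw [coeff_derivative, coeff_succ_X_mul]; simp [hM, mul_comm]
  rw [hat_res_sq, hN]
  have hXM : (X * M).subst (X * h⁻¹) = X := by
    rw [subst_mul (hs_u h), subst_X (hs_u h), hS]; linear_combination X * hy
  have hd := derivative_subst (f := X * M) (hs_u h)
  rw [hXM, derivative_X] at hd
  set N := (derivative ℂ (X * M)).subst (X * h⁻¹)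
  have hu : derivative ℂ (X * h⁻¹) * h + (X * h⁻¹) * derivative ℂ h = 1 := by
    have : derivative ℂ ((X * h⁻¹) * h) = 1 := by
      rw [mul_assoc, mul_comm h⁻¹, hy, mul_one, derivative_X]
    rw [Derivation.leibniz] at this
    simp only [smul_eq_mul] at this
    linear_combination this
  set u' := derivative ℂ (X * h⁻¹)
  set h' := derivative ℂ h
  have e : h⁻¹ * h⁻¹ * (h - X * h') = u' := by
    linear_combination (h⁻¹ + u') * hy - h⁻¹ * hu
  linear_combination N * e - hd

lemma sq_eq_T (l : B →ₗ[ℂ] ℂ) (b : B) (h : ℂ⟦X⟧) (hh : constantCoeff h = 1)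
    (h1 : hat l (res b h) = 1) (t : ℕ → ℂ)
    (ht : ∀ n : ℕ, ((n : ℂ) + 1) * l (b ^ n) =
      ∑ j ∈ Finset.range (n + 1), t j * l (b ^ (n - j))) :
    hat l (res b h * res b h) = h⁻¹ * (PowerSeries.mk t).subst (X * h⁻¹) := by
  have hy : h * h⁻¹ = 1 := PowerSeries.mul_inv_cancel _ (by simp [hh])
  have hS := subst_of_hat_one l b h hh h1
  have hN : (PowerSeries.mk fun n => ((n : ℂ) + 1) * l (b ^ n)) =
      PowerSeries.mk t * PowerSeries.mk fun n => l (b ^ n) := by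
    ext n
    rw [coeff_mul, Finset.Nat.sum_antidiagonal_eq_sum_range_succ_mk]
    simp [ht]
  rw [hat_res_sq, hN, subst_mul (hs_u h), hS]
  linear_combination h⁻¹ * (PowerSeries.mk t).subst (X * h⁻¹) * hy

/-- Existence of the normalising series. -/
lemma exists_h (l : B →ₗ[ℂ] ℂ) (hl : l 1 = 1) (b : B) :
    ∃ h : ℂ⟦X⟧, constantCoeff h = 1 ∧ hat l (res b h) = 1 := by
  set M := PowerSeries.mk fun n => l (b ^ n) with hM
  have hM0 : constantCoeff M = 1 := by
    rw [← coeff_zero_eq_constantCoeff_apply]; simp [hM, hl]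
  have hP : (X * M).constantCoeff = 0 := by simp
  have hP' : IsUnit ((X * M).coeff 1) := by
    rw [show (1 : ℕ) = 0 + 1 from rfl, coeff_succ_X_mul, coeff_zero_eq_constantCoeff_apply, hM0]
    exact isUnit_one
  set u := (X * M).substInvOfIsUnit hP' with hu
  have hsu : HasSubst u := HasSubst.substInvOfIsUnit _ hP'
  have hr : (X * M).subst u = X := subst_substInvOfIsUnit_right _ hP hP'
  have hcu : constantCoeff u = 0 := constantCoeff_substInvOfIsUnit _ hP'
  rw [subst_mul hsu, subst_X hsu] at hr
  set h := M.subst u with hh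
  obtain ⟨v, hv⟩ := X_dvd_iff.2 hcu
  have hvh : v * h = 1 := by
    have : (X : ℂ⟦X⟧) * (v * h) = X * 1 := by rw [← mul_assoc, ← hv, hr, mul_one]
    exact mul_left_cancel₀ X_ne_zero this
  have hc : constantCoeff h = 1 := by
    have hM1 : M = C 1 + (M - C 1) := by ring
    have : h = C 1 + (M - C 1).subst u := by
      rw [hh]; conv_lhs => rw [hM1]
      rw [subst_add hsu, subst_C]; rfl
    rw [this, map_add]
    have := constantCoeff_subst_eq_zero (a := u) hcu (M - C 1) (by simp [hM0])
    erw [this]; simp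
  refine ⟨h, hc, ?_⟩
  have hy : h * h⁻¹ = 1 := PowerSeries.mul_inv_cancel _ (by simp [hc])
  have hvi : v = h⁻¹ := by linear_combination h⁻¹ * hvh - v * hy
  rw [hat_res, ← hvi, ← hv, ← hM, ← hh, hvh]

lemma subst_inj (h : ℂ⟦X⟧) (hh : constantCoeff h = 1) (D : ℂ⟦X⟧)
    (hD : D.subst (X * h⁻¹) = 0) : D = 0 := by
  have hy : h * h⁻¹ = 1 := PowerSeries.mul_inv_cancel _ (by simp [hh])
  have hP : (X * h⁻¹).constantCoeff = 0 := by simp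
  have hP' : IsUnit ((X * h⁻¹).coeff 1) := by
    rw [show (1 : ℕ) = 0 + 1 from rfl, coeff_succ_X_mul, coeff_zero_eq_constantCoeff_apply,
      constantCoeff_inv, hh]
    simp
  set v := (X * h⁻¹).substInvOfIsUnit hP'
  have hsv : HasSubst v := HasSubst.substInvOfIsUnit _ hP'
  have hr : (X * h⁻¹).subst v = X := subst_substInvOfIsUnit_right _ hP hP'
  have h2 := subst_comp_subst_apply (hs_u h) hsv D
  rw [hr, hD, X_subst, ← coe_substAlgHom hsv, map_zero] at h2
  exact h2.symm

end single

section words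

/-- Alternating index. -/
def alt (i : Bool) (k : ℕ) : Bool := if Even k then i else !i

lemma alt_zero (i : Bool) : alt i 0 = i := by simp [alt]
lemma alt_succ (i : Bool) (k : ℕ) : alt i (k + 1) = alt (!i) k := by
  unfold alt; by_cases h : Even k <;> simp [h, Nat.even_add_one]
lemma alt_even (i : Bool) {k : ℕ} (h : Even k) : alt i k = i := by simp [alt, h]
lemma alt_ne (i : Bool) (k : ℕ) : alt i k ≠ alt i (k + 1) := by
  unfold alt; by_cases h : Even k <;> cases i <;> simp [h, Nat.even_add_one]

/-- The product `b 0 * ⋯ * b (n-1)`. -/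
def wd (b : ℕ → B) (n : ℕ) : B := (List.ofFn fun k : Fin n => b k).prod

lemma wd_zero (b : ℕ → B) : wd b 0 = 1 := by simp [wd]
lemma wd_succ (b : ℕ → B) (n : ℕ) : wd b (n + 1) = b 0 * wd (fun k => b (k + 1)) n := by
  simp [wd, List.ofFn_succ]
lemma wd_succ' (b : ℕ → B) (n : ℕ) : wd b (n + 1) = wd b n * b n := by
  induction n generalizing b with
  | zero => simp [wd]
  | succ n ih => rw [wd_succ, ih, wd_succ b n, mul_assoc]
lemma wd_congr (b c : ℕ → B) (n : ℕ) (h : ∀ k < n, b k = c k) : wd b n = wd c n := by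
  unfold wd; congr 2; ext k; exact h k k.2

/-- Span of alternating words from `C` starting with `i`, with lengths in `P`. -/
def T (C : Bool → Submodule ℂ B) (i : Bool) (P : Set ℕ) : Submodule ℂ B :=
  Submodule.span ℂ {x | ∃ n ∈ P, ∃ b : ℕ → B, (∀ k, b k ∈ C (alt i k)) ∧ x = wd b n}

variable {C : Bool → Submodule ℂ B}

/-- Prepend a letter. -/
def consW (c : B) (b : ℕ → B) : ℕ → B
  | 0 => c
  | k + 1 => b k

lemma consW_mem {i : Bool} {c : B} {b : ℕ → B} (hc : c ∈ C i) (hb : ∀ k, b k ∈ C (alt (!i) k)) :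
    ∀ k, consW c b k ∈ C (alt i k)
  | 0 => by rw [alt_zero]; exact hc
  | k + 1 => by rw [alt_succ]; exact hb k

lemma wd_consW (c : B) (b : ℕ → B) (n : ℕ) : wd (consW c b) (n + 1) = c * wd b n := by
  rw [wd_succ]; rfl

lemma wd_update (c : B) (b : ℕ → B) (n : ℕ) : wd (Function.update b n c) (n + 1) = wd b n * c := by
  rw [wd_succ', Function.update_self]
  congr 1
  exact wd_congr _ _ _ fun k hk => by rw [Function.update_of_ne (by omega)]

lemma update_mem {i : Bool} {c : B} {b : ℕ → B} {n : ℕ} (hc : c ∈ C (alt i n))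
    (hb : ∀ k, b k ∈ C (alt i k)) : ∀ k, Function.update b n c k ∈ C (alt i k) := by
  intro k
  by_cases h : k = n
  · subst h; simpa using hc
  · rw [Function.update_of_ne h]; exact hb k

lemma T_mulL {i : Bool} {P Q : Set ℕ} (h : ∀ n ∈ P, n + 1 ∈ Q) {c x : B} (hc : c ∈ C i)
    (hx : x ∈ T C (!i) P) : c * x ∈ T C i Q := by
  induction hx using Submodule.span_induction with
  | mem x hx =>
    obtain ⟨n, hn, b, hb, rfl⟩ := hx
    exact Submodule.subset_span ⟨n + 1, h n hn, _, consW_mem hc hb, (wd_consW _ _ _).symm⟩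
  | zero => simp
  | add x y _ _ hx hy => rw [mul_add]; exact add_mem hx hy
  | smul a x _ hx => rw [mul_smul_comm]; exact Submodule.smul_mem _ _ hx

lemma T_mulR {i j : Bool} {P Q : Set ℕ} (h : ∀ n ∈ P, n + 1 ∈ Q ∧ alt i n = j) {c x : B}
    (hc : c ∈ C j) (hx : x ∈ T C i P) : x * c ∈ T C i Q := by
  induction hx using Submodule.span_induction with
  | mem x hx =>
    obtain ⟨n, hn, b, hb, rfl⟩ := hx
    exact Submodule.subset_span ⟨n + 1, (h n hn).1, _,
      update_mem (by rw [(h n hn).2]; exact hc) hb, (wd_update _ _ _).symm⟩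
  | zero => simp
  | add x y _ _ hx hy => rw [add_mul]; exact add_mem hx hy
  | smul a x _ hx => rw [smul_mul_assoc]; exact Submodule.smul_mem _ _ hx

/-- Abstract form of infinitesimal freeness on centered subspaces. -/
structure Hyp (φ φ' : B →ₗ[ℂ] ℂ) (C : Bool → Submodule ℂ B) : Prop where
  one : φ 1 = 1
  one' : φ' 1 = 0
  h1 : ∀ n i (b : ℕ → B), (∀ k, b k ∈ C (alt i k)) → φ (wd b (n + 1)) = 0
  h2 : ∀ n i (b : ℕ → B), (∀ k, b k ∈ C (alt i k)) → φ' (wd b (2 * n + 2)) = 0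
  h3 : ∀ n i (b : ℕ → B), (∀ k, b k ∈ C (alt i k)) →
    φ' (wd b (2 * n + 1)) = (∏ j ∈ Finset.range n, φ (b j * b (2 * n - j))) * φ' (b n)

variable {φ φ' : B →ₗ[ℂ] ℂ}

lemma T_zero (l : B →ₗ[ℂ] ℂ) {i : Bool} {P : Set ℕ}
    (h : ∀ n ∈ P, ∀ b : ℕ → B, (∀ k, b k ∈ C (alt i k)) → l (wd b n) = 0) {x : B}
    (hx : x ∈ T C i P) : l x = 0 := by
  have : T C i P ≤ LinearMap.ker l := by
    refine Submodule.span_le.2 ?_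
    rintro _ ⟨n, hn, b, hb, rfl⟩
    exact h n hn b hb
  exact this hx

lemma T_peel (H : Hyp φ φ' C) {i : Bool} {a c y : B} (ha : a ∈ C i) (hc : c ∈ C i)
    (hy : y ∈ T C (!i) {n | Odd n}) : φ' (a * y * c) = φ (a * c) * φ' y := by
  induction hy using Submodule.span_induction with
  | mem x hx =>
    obtain ⟨n, ⟨m, rfl⟩, b, hb, rfl⟩ := hx
    have hcm : c ∈ C (alt i (2 * m + 2)) := by
      rw [alt_even i ⟨m + 1, by ring⟩]; exact hc
    have key := H.h3 (m + 1) i _ (update_mem hcm (consW_mem ha hb))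
    rw [show 2 * (m + 1) + 1 = (2 * m + 2) + 1 by ring, wd_update,
      show 2 * m + 2 = (2 * m + 1) + 1 by ring, wd_consW] at key
    rw [key, H.h3 m _ b hb, Finset.prod_range_succ']
    rw [Function.update_of_ne (by omega : m + 1 ≠ 2 * m + 1 + 1)]
    have e0 : Function.update (consW a b) (2 * m + 1 + 1) c 0 *
        Function.update (consW a b) (2 * m + 1 + 1) c (2 * (m + 1) - 0) = a * c := by
      rw [Function.update_of_ne (by omega), show 2 * (m + 1) - 0 = 2 * m + 1 + 1 by omega,
        Function.update_self]; rfl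
    rw [e0]
    have e1 : ∏ k ∈ Finset.range m, φ (Function.update (consW a b) (2 * m + 1 + 1) c (k + 1) *
        Function.update (consW a b) (2 * m + 1 + 1) c (2 * (m + 1) - (k + 1))) =
        ∏ j ∈ Finset.range m, φ (b j * b (2 * m - j)) := by
      refine Finset.prod_congr rfl fun k hk => ?_
      have := Finset.mem_range.1 hk
      rw [Function.update_of_ne (by omega), Function.update_of_ne (by omega),
        show 2 * (m + 1) - (k + 1) = (2 * m - k) + 1 by omega]
      rfl
    rw [e1]
    simp only [consW]; ring
  | zero => simp
  | add x y _ _ hx hy => rw [mul_add, add_mul, map_add, map_add, hx, hy]; ring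
  | smul r x _ hx =>
    rw [mul_smul_comm, smul_mul_assoc, map_smul, map_smul, hx]; simp only [smul_eq_mul]; ring

open PowerSeries

lemma hat_zero (l : B →ₗ[ℂ] ℂ) (f : B⟦X⟧) (h : ∀ n, l (coeff n f) = 0) : hat l f = 0 := by
  ext n; simp [coeff_hat, h]

lemma coeff_mul_mem {M N L : Submodule ℂ B} (h : ∀ x ∈ M, ∀ y ∈ N, x * y ∈ L) {f g : B⟦X⟧}
    (hf : ∀ n, coeff n f ∈ M) (hg : ∀ n, coeff n g ∈ N) (n : ℕ) : coeff n (f * g) ∈ L := by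
  rw [coeff_mul]
  exact Submodule.sum_mem _ fun p _ => h _ (hf _) _ (hg _)

lemma hat_peel {a Y c : B⟦X⟧}
    (h : ∀ r s t, φ' (coeff r a * coeff s Y * coeff t c) =
      φ (coeff r a * coeff t c) * φ' (coeff s Y)) :
    hat φ' (a * Y * c) = hat φ (a * c) * hat φ' Y := by
  ext n
  simp only [coeff_hat, coeff_mul, map_sum, Finset.sum_mul, h]
  rw [Finset.sum_sigma', Finset.sum_sigma']
  refine Finset.sum_nbij' (fun x => ⟨(x.2.1 + x.1.2, x.2.2), (x.2.1, x.1.2)⟩)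
    (fun x => ⟨(x.2.1 + x.1.2, x.2.2), (x.2.1, x.1.2)⟩) ?_ ?_ ?_ ?_ ?_
  · rintro ⟨⟨p, q⟩, ⟨r, s⟩⟩ h; simp at h ⊢; omega
  · rintro ⟨⟨p, q⟩, ⟨r, s⟩⟩ h; simp at h ⊢; omega
  · rintro ⟨⟨p, q⟩, ⟨r, s⟩⟩ h; simp at h ⊢; omega
  · rintro ⟨⟨p, q⟩, ⟨r, s⟩⟩ h; simp at h ⊢; omega
  · rintro ⟨⟨p, q⟩, ⟨r, s⟩⟩ h; simp

theorem main_free (H : Hyp φ φ' C) (a₁ a₂ : B⟦X⟧) (h₁ : ∀ n, coeff n a₁ ∈ C true)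
    (h₂ : ∀ n, coeff n a₂ ∈ C false) (h0 : constantCoeff a₁ = 0) :
    ∃ E : B⟦X⟧, (1 - a₁ * a₂) * E = 1 ∧ E * (1 - a₁ * a₂) = 1 ∧
      hat φ ((1 + a₂) * E * (1 + a₁)) = 1 ∧
      ∃ o₁ o₂ : ℂ⟦X⟧, hat φ' ((1 + a₂) * E * (1 + a₁)) = o₁ + o₂ ∧
        o₁ = hat φ' a₁ + hat φ (a₁ * a₁) * o₂ ∧ o₂ = hat φ' a₂ + hat φ (a₂ * a₂) * o₁ := by
  set E := invOfUnit (1 - a₁ * a₂) 1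
  have hE1 : (1 - a₁ * a₂) * E = 1 := mul_invOfUnit _ _ (by simp [h0])
  have hE2 : E * (1 - a₁ * a₂) = 1 := invOfUnit_mul _ _ (by simp [h0])
  have e1 : E = 1 + a₁ * (a₂ * E) := by
    rw [sub_mul, one_mul, sub_eq_iff_eq_add, mul_assoc] at hE1; exact hE1
  have e2 : E = 1 + E * a₁ * a₂ := by
    rw [mul_sub, mul_one, sub_eq_iff_eq_add, ← mul_assoc] at hE2; exact hE2
  have hEm : ∀ n, coeff n E ∈ T C true {n | Even n} := by
    intro n
    induction n using Nat.strong_induction_on with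
    | _ n ih =>
      rw [e1, ← mul_assoc, map_add]
      refine add_mem ?_ ?_
      · rw [coeff_one]
        split_ifs
        · exact Submodule.subset_span ⟨0, by simp, fun _ => 0, fun k => zero_mem _, by rw [wd_zero]⟩
        · exact zero_mem _
      · rw [coeff_mul]
        refine Submodule.sum_mem _ fun p hp => ?_
        have hp' := Finset.HasAntidiagonal.mem_antidiagonal.1 hp
        by_cases hp1 : p.1 = 0
        · rw [hp1, coeff_zero_eq_constantCoeff_apply, map_mul, h0]; simp
        · rw [coeff_mul, Finset.sum_mul]
          refine Submodule.sum_mem _ fun q _ => ?_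
          rw [mul_assoc]
          refine T_mulL (P := {n | Odd n}) (fun n hn => ?_) (h₁ _)
            (T_mulL (P := {n | Even n}) (fun n hn => ?_) (h₂ _) (ih _ (by omega)))
          · exact Odd.add_one hn
          · exact Even.add_one hn
  have ho2 : ∀ n, coeff n (a₂ * E) ∈ T C false {n | Odd n} :=
    coeff_mul_mem (fun x hx y hy => T_mulL (fun n hn => Even.add_one hn) hx hy) h₂ hEm
  have ho1 : ∀ n, coeff n (E * a₁) ∈ T C true {n | Odd n} :=
    coeff_mul_mem (fun x hx y hy =>
      T_mulR (fun n hn => ⟨Even.add_one hn, alt_even _ hn⟩) hy hx) hEm h₁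
  have he1 : ∀ n, coeff n (a₁ * (a₂ * E)) ∈ T C true {n | ∃ m, n = 2 * m + 2} := by
    refine coeff_mul_mem (fun x hx y hy => T_mulL (fun n hn => ?_) hx hy) h₁ ho2
    obtain ⟨m, rfl⟩ := hn; exact ⟨m, rfl⟩
  have he2 : ∀ n, coeff n (a₂ * (E * a₁)) ∈ T C false {n | ∃ m, n = 2 * m + 2} := by
    refine coeff_mul_mem (fun x hx y hy => T_mulL (fun n hn => ?_) hx hy) h₂ ho1
    obtain ⟨m, rfl⟩ := hn; exact ⟨m, rfl⟩
  have hex : (1 + a₂) * E * (1 + a₁) =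
      1 + a₁ * (a₂ * E) + a₂ * E + E * a₁ + a₂ * (E * a₁) := by
    rw [← e1]; noncomm_ring
  have hφe {i : Bool} {f : B⟦X⟧} (hf : ∀ n, coeff n f ∈ T C i {n | ∃ m, n = 2 * m + 2}) :
      hat φ f = 0 ∧ hat φ' f = 0 := by
    constructor
    · refine hat_zero _ _ fun n => T_zero _ ?_ (hf n)
      rintro _ ⟨m, rfl⟩ b hb
      exact H.h1 (2 * m + 1) _ b hb
    · refine hat_zero _ _ fun n => T_zero _ ?_ (hf n)
      rintro _ ⟨m, rfl⟩ b hb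
      exact H.h2 m _ b hb
  have hφo {i : Bool} {f : B⟦X⟧} (hf : ∀ n, coeff n f ∈ T C i {n | Odd n}) :
      hat φ f = 0 := by
    refine hat_zero _ _ fun n => T_zero _ ?_ (hf n)
    rintro _ ⟨m, rfl⟩ b hb
    exact H.h1 (2 * m) _ b hb
  refine ⟨E, hE1, hE2, ?_, hat φ' (E * a₁), hat φ' (a₂ * E), ?_, ?_, ?_⟩
  · rw [hex]
    simp only [hat_add, (hφe he1).1, (hφe he2).1, hφo ho1, hφo ho2, hat_one, H.one]
    simp
  · rw [hex]
    simp only [hat_add, (hφe he1).2, (hφe he2).2, hat_one, H.one', map_zero]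
    ring
  · rw [← hat_peel (fun r s t => T_peel H (h₁ r) (h₁ t) (ho2 s)), ← hat_add]
    congr 1
    conv_lhs => rw [e1]
    noncomm_ring
  · rw [← hat_peel (fun r s t => T_peel H (h₂ r) (h₂ t) (ho1 s)), ← hat_add]
    congr 1
    conv_lhs => rw [e2]
    noncomm_ring

/-- Multiplying out the resolvent identity. -/
lemma res_factor {R : Type*} [Ring R] {U₁ U₂ V₁ V₂ E : R}
    (h2 : U₂ * V₂ = 1) (h1' : U₁ * V₁ = 1)
    (hE : E * (1 - (U₁ - 1) * (U₂ - 1)) = 1) :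
    U₂ * E * U₁ * (V₁ + V₂ - 1) = 1 := by
  have e : U₁ * (V₁ + V₂ - 1) = (1 - (U₁ - 1) * (U₂ - 1)) * V₂ := by
    have : (1 - (U₁ - 1) * (U₂ - 1)) * V₂ = U₁ * V₂ + U₂ * V₂ - U₁ * (U₂ * V₂) := by noncomm_ring
    rw [this, h2, mul_sub, mul_add, h1']; noncomm_ring
  rw [mul_assoc, e, mul_assoc, ← mul_assoc E, hE, one_mul, h2]

end words

section final

/-- Centered elements. -/
noncomputable def cen (φ : B →ₗ[ℂ] ℂ) (b₁ b₂ : B) (i : Bool) : Submodule ℂ B :=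
  (Subalgebra.toSubmodule (if i then Algebra.adjoin ℂ {b₁} else Algebra.adjoin ℂ {b₂})) ⊓
    LinearMap.ker φ

lemma hyp_of_inf (φ φ' : B →ₗ[ℂ] ℂ) (hφ1 : φ 1 = 1) (hφ'1 : φ' 1 = 0)
    (b₁ b₂ : B)
    (hinf : IsInfFree ⇑φ ⇑φ' (fun i : Bool =>
      if i then (Algebra.adjoin ℂ {b₁} : Set B)
      else (Algebra.adjoin ℂ {b₂} : Set B))) : Hyp φ φ' (cen φ b₁ b₂) := by
  have hm : ∀ i x, x ∈ cen φ b₁ b₂ i → x ∈ (fun i : Bool =>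
      if i then (Algebra.adjoin ℂ {b₁} : Set B)
      else (Algebra.adjoin ℂ {b₂} : Set B)) i := by
    rintro (_ | _) x hx
    · simpa [cen] using hx.1
    · simpa [cen] using hx.1
  have hz : ∀ i x, x ∈ cen φ b₁ b₂ i → φ x = 0 := fun i x hx => hx.2
  obtain ⟨f1, f2, f3⟩ := hinf
  refine ⟨hφ1, hφ'1, fun n i b hb => ?_, fun n i b hb => ?_, fun n i b hb => ?_⟩
  · exact f1 n (fun k => alt i k) (fun k => b k) (fun k => alt_ne i k)
      (fun k => hm _ _ (hb k)) (fun k => hz _ _ (hb k))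
  · refine f2 (2 * n + 1) (fun k => alt i k) (fun k => b k) (fun k => alt_ne i k)
      (fun k => hm _ _ (hb k)) (fun k => hz _ _ (hb k)) ?_
    rintro ⟨h, _⟩
    exact (Nat.not_even_iff_odd.2 ⟨n, rfl⟩) h
  · have := f3 n (fun k => alt i k) (fun k => b k) (fun k => alt_ne i k)
      (fun k => hm _ _ (hb k)) (fun k => hz _ _ (hb k)) (fun k => ?_)
    · rw [wd, this, Finset.prod_range]
      congr 1
      refine Finset.prod_congr rfl fun j _ => ?_
      congr 3
      simp [Fin.val_rev]
    · have hk := k.2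
      have : Even (k : ℕ) ↔ Even ((k.rev : Fin (2 * n + 1)) : ℕ) := by
        rw [Fin.val_rev]
        simp only [Nat.even_iff]; omega
      simp only [alt, this]

open PowerSeries

theorem statement15
    {B : Type*} [Ring B] [Algebra ℂ B]
    (φ φ' : B →ₗ[ℂ] ℂ) (hφ1 : φ 1 = 1) (hφ'1 : φ' 1 = 0)
    (b₁ b₂ : B)
    (hinf : IsInfFree ⇑φ ⇑φ' (fun i : Bool =>
      if i then (Algebra.adjoin ℂ {b₁} : Set B)
      else (Algebra.adjoin ℂ {b₂} : Set B)))
    (t₁ t₂ t : ℕ → ℂ)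
    (ht₁ : IsInvMK (fun n => φ (b₁ ^ n)) t₁)
    (ht₂ : IsInvMK (fun n => φ (b₂ ^ n)) t₂)
    (hb₁ : ∀ n : ℕ, 0 < n → φ' (b₁ ^ n) = φ (b₁ ^ n) - t₁ n)
    (hb₂ : ∀ n : ℕ, 0 < n → φ' (b₂ ^ n) = φ (b₂ ^ n) - t₂ n)
    (ht : IsInvMK (fun n => φ ((b₁ + b₂) ^ n)) t) :
    ∀ n : ℕ, 0 < n → φ' ((b₁ + b₂) ^ n) = φ ((b₁ + b₂) ^ n) - t n := by
  have H := hyp_of_inf φ φ' hφ1 hφ'1 b₁ b₂ hinf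
  obtain ⟨g₁, hg₁, hU₁⟩ := exists_h φ hφ1 b₁
  obtain ⟨g₂, hg₂, hU₂⟩ := exists_h φ hφ1 b₂
  -- the one-variable relation
  have single (b : B) (s : ℕ → ℂ) (hs : IsInvMK (fun n => φ (b ^ n)) s)
      (hb : ∀ n : ℕ, 0 < n → φ' (b ^ n) = φ (b ^ n) - s n) (g : ℂ⟦X⟧)
      (hg : constantCoeff g = 1) (hU : hat φ (res b g) = 1) :
      hat φ' (res b g) = 1 - hat φ (res b g * res b g) := by
    have hM : (PowerSeries.mk fun n => φ' (b ^ n)) =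
        (PowerSeries.mk fun n => φ (b ^ n)) - PowerSeries.mk s := by
      ext n
      rcases Nat.eq_zero_or_pos n with rfl | hn
      · have := hs 0
        simp [hφ1] at this
        simp [hφ1, hφ'1, ← this]
      · simp [hb n hn]
    rw [sq_eq_T φ b g hg hU s hs, hat_res, hM, subst_sub (hs_u g), mul_sub, ← hat_res, hU]
  have s₁ := single b₁ t₁ ht₁ hb₁ g₁ hg₁ hU₁
  have s₂ := single b₂ t₂ ht₂ hb₂ g₂ hg₂ hU₂
  have D₁ := sq_mul_D φ b₁ g₁ hg₁ hU₁
  have D₂ := sq_mul_D φ b₂ g₂ hg₂ hU₂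
  have mem (b : B) (g : ℂ⟦X⟧) (hU : hat φ (res b g) = 1) (n : ℕ) :
      coeff n (res b g - 1) ∈ Algebra.adjoin ℂ {b} ∧ φ (coeff n (res b g - 1)) = 0 := by
    constructor
    · rw [map_sub, coeff_one]
      refine sub_mem (coeff_res_mem b g n) ?_
      split_ifs
      · exact one_mem _
      · exact zero_mem _
    · rw [← coeff_hat, hat_sub, hU, hat_one, hφ1]; simp
  have m₁ : ∀ n, coeff n (res b₁ g₁ - 1) ∈ cen φ b₁ b₂ true := fun n => by
    simpa [cen] using mem b₁ g₁ hU₁ n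
  have m₂ : ∀ n, coeff n (res b₂ g₂ - 1) ∈ cen φ b₁ b₂ false := fun n => by
    simpa [cen] using mem b₂ g₂ hU₂ n
  obtain ⟨E, hE1, hE2, hEφ, o₁, o₂, ho, ho₁, ho₂⟩ := main_free H _ _ m₁ m₂
    (by rw [map_sub, cc_res _ _ hg₁]; simp)
  rw [add_sub_cancel, add_sub_cancel] at hEφ ho
  set g := g₁ + g₂ - 1 with hgdef
  have hg : constantCoeff g = 1 := by simp [hgdef, hg₁, hg₂]
  have hU : res b₂ g₂ * E * res b₁ g₁ = res (b₁ + b₂) g := by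
    have := res_factor (res_mul_V b₂ g₂ hg₂) (res_mul_V b₁ g₁ hg₁) hE2
    refine left_inv_eq_right_inv this ?_
    refine Eq.trans ?_ (V_mul_res (b₁ + b₂) g hg)
    congr 1
    rw [hgdef]
    simp only [map_add, map_sub, map_one, mul_add]
    abel
  rw [hU] at hEφ ho
  have D := sq_mul_D φ (b₁ + b₂) g hg hEφ
  have hsq (b : B) (g : ℂ⟦X⟧) (hU : hat φ (res b g) = 1) :
      hat φ ((res b g - 1) * (res b g - 1)) = hat φ (res b g * res b g) - 1 := by
    have : (res b g - 1) * (res b g - 1) = res b g * res b g - res b g - res b g + 1 := by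
      noncomm_ring
    rw [this, hat_add, hat_sub, hat_sub, hU, hat_one, hφ1, map_one]; ring
  have h1' : ∀ f, hat φ' (f - 1) = hat φ' f := fun f => by
    rw [hat_sub, hat_one, hφ'1, map_zero, sub_zero]
  rw [hsq _ _ hU₁, h1', s₁] at ho₁
  rw [hsq _ _ hU₂, h1', s₂] at ho₂
  have hd : g - X * derivative ℂ g =
      (g₁ - X * derivative ℂ g₁) + (g₂ - X * derivative ℂ g₂) - 1 := by
    rw [hgdef, map_sub, map_add, derivative_one]; ring
  rw [hd] at D
  have T := sq_eq_T φ (b₁ + b₂) g hg hEφ t ht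
  have hfin : hat φ' (res (b₁ + b₂) g) = 1 - hat φ (res (b₁ + b₂) g * res (b₁ + b₂) g) := by
    rw [ho]
    generalize hat φ (res (b₁ + b₂) g * res (b₁ + b₂) g) = q at *
    generalize hat φ (res b₁ g₁ * res b₁ g₁) = q₁ at *
    generalize hat φ (res b₂ g₂ * res b₂ g₂) = q₂ at *
    generalize (g₁ - X * derivative ℂ g₁) = d₁ at *
    generalize (g₂ - X * derivative ℂ g₂) = d₂ at *
    have k1 : (d₁ + d₂ - 1) * (q₁ * q₂) = q₁ + q₂ - q₁ * q₂ := by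
      linear_combination q₂ * D₁ + q₁ * D₂
    have k2 : (o₁ + o₂) * (q₁ + q₂ - q₁ * q₂) = q₁ + q₂ - 2 * (q₁ * q₂) := by
      linear_combination q₂ * ho₁ + q₁ * ho₂
    have k3 : ((o₁ + o₂) * (d₁ + d₂ - 1)) * (q₁ * q₂) = (d₁ + d₂ - 1 - 1) * (q₁ * q₂) := by
      linear_combination k2 + (o₁ + o₂ - 1) * k1
    have hne : q₁ * q₂ ≠ 0 := by
      intro h0
      have : (q₁ * q₂) * (d₁ * d₂) = 1 := by linear_combination q₂ * d₂ * D₁ + D₂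
      rw [h0, zero_mul] at this
      exact zero_ne_one this
    have k4 := mul_right_cancel₀ hne k3
    linear_combination q * k4 + (1 - o₁ - o₂) * D
  rw [T, hat_res] at hfin
  rw [hat_res] at hEφ
  have hy : g * g⁻¹ = 1 := PowerSeries.mul_inv_cancel _ (by simp [hg])
  have hz : ((PowerSeries.mk fun n => φ' ((b₁ + b₂) ^ n)) -
      ((PowerSeries.mk fun n => φ ((b₁ + b₂) ^ n)) - PowerSeries.mk t)).subst (X * g⁻¹) = 0 := by
    rw [subst_sub (hs_u g), subst_sub (hs_u g)]
    generalize (PowerSeries.mk fun n => φ' ((b₁ + b₂) ^ n)).subst (X * g⁻¹) = p at *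
    generalize (PowerSeries.mk fun n => φ ((b₁ + b₂) ^ n)).subst (X * g⁻¹) = q at *
    generalize (PowerSeries.mk t).subst (X * g⁻¹) = r at *
    linear_combination g * hfin - g * hEφ - (p - q + r) * hy
  have := subst_inj g hg _ hz
  intro n _
  have hn := congrArg (coeff n) this
  simp at hn
  linear_combination hn

end final

end TypeBPrime
end

section
/- Let (B, φ, φ′) be an infinitesimal noncommutative probability space and let b₁, b₂ ∈ B be infinitesimally free. For i = 1, 2 set mᵢ(n) := φ(bᵢⁿ) (so mᵢ(0) = 1), let (tᵢ(n))_{n≥0} be the inverse Markov–Krein transform of (mᵢ(n))_{n≥0}, and assume φ′(bᵢⁿ) = mᵢ(n) − tᵢ(n) for all n ≥ 1. Set m(n) := φ((b₁ b₂)ⁿ) and let (t(n))_{n≥0} be the inverse Markov–Krein transform of (m(n))_{n≥0}. Then φ′((b₁ b₂)ⁿ) = m(n) − t(n) for all n ≥ 1. (This expresses the identity (μ₁, μ₁ − τ₁) ⊠ (μ₂, μ₂ − τ₂) = (μ, μ − τ) for the infinitesimal free multiplicative convolution, where μ = μ₁ ⊠ μ₂ and τ, τᵢ are the inverse Markov–Krein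 transforms of μ, μᵢ.) -/
open scoped BigOperators

namespace TypeBPrime

variable {B : Type*} [Ring B] [Algebra ℂ B]

set_option linter.unusedSectionVars false

/-! ### Scalars inside `B⟦X⟧`, coefficientwise functionals, and substitution -/

section Series

open PowerSeries

/-- Scalar power series inside `B⟦X⟧`. -/
noncomputable def sc (B : Type*) [Ring B] [Algebra ℂ B] : PowerSeries ℂ →+* PowerSeries B :=
  PowerSeries.map (algebraMap ℂ B)

/-- Coefficientwise extension of a functional. -/
noncomputable def ext (φ : B →ₗ[ℂ] ℂ) (u : PowerSeries B) : PowerSeries ℂ :=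
  PowerSeries.mk fun n => φ (coeff n u)

theorem coeff_ext (φ : B →ₗ[ℂ] ℂ) (u : PowerSeries B) (n : ℕ) :
    coeff n (ext φ u) = φ (coeff n u) := by simp [ext]

theorem coeff_sc_mul (f : PowerSeries ℂ) (u : PowerSeries B) (n : ℕ) :
    coeff n (sc B f * u) =
      ∑ p ∈ Finset.HasAntidiagonal.antidiagonal n, coeff p.1 f • coeff p.2 u := by
  simp [sc, coeff_mul, Algebra.smul_def]

theorem sc_comm (f : PowerSeries ℂ) (u : PowerSeries B) : sc B f * u = u * sc B f := by
  ext n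
  rw [coeff_mul, coeff_mul, ← Finset.Nat.sum_antidiagonal_swap]
  refine Finset.sum_congr rfl fun p _ => ?_
  simp [sc, Algebra.commutes]

theorem sc_X : sc B X = X := by simp [sc]

theorem ext_add (φ : B →ₗ[ℂ] ℂ) (u v : PowerSeries B) : ext φ (u + v) = ext φ u + ext φ v := by
  ext n; simp [coeff_ext]

theorem ext_sub (φ : B →ₗ[ℂ] ℂ) (u v : PowerSeries B) : ext φ (u - v) = ext φ u - ext φ v := by
  ext n; simp [coeff_ext]

theorem ext_sc (φ : B →ₗ[ℂ] ℂ) (f : PowerSeries ℂ) (u : PowerSeries B) :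
    ext φ (sc B f * u) = f * ext φ u := by
  ext n
  rw [coeff_ext, coeff_sc_mul, coeff_mul, map_sum]
  simp [coeff_ext]

theorem ext_X (φ : B →ₗ[ℂ] ℂ) (u : PowerSeries B) :
    ext φ (X * u) = X * ext φ u := by
  rw [← sc_X, ext_sc]

theorem ext_C (φ : B →ₗ[ℂ] ℂ) (b : B) : ext φ (C b) = C (φ b) := by
  ext n
  rw [coeff_ext, coeff_C, coeff_C]
  split_ifs <;> simp

theorem ext_one (φ : B →ₗ[ℂ] ℂ) : ext φ (1 : PowerSeries B) = C (φ 1) := by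
  rw [← ext_C]; simp

/-- Substitution of `w` in a power series. -/
noncomputable def sb (w : PowerSeries ℂ) (c : PowerSeries B) : PowerSeries B :=
  PowerSeries.mk fun k => ∑ n ∈ Finset.range (k + 1), coeff k (w ^ n) • coeff n c

theorem coeff_pow_zero {w : PowerSeries ℂ} (hw : constantCoeff w = 0) {k n : ℕ} (h : k < n) :
    coeff k (w ^ n) = 0 := by
  have : (X : PowerSeries ℂ) ^ n ∣ w ^ n := pow_dvd_pow_of_dvd (X_dvd_iff.2 hw) n
  exact X_pow_dvd_iff.1 this k h

theorem coeff_sb {w : PowerSeries ℂ} (hw : constantCoeff w = 0) (c : PowerSeries B) {k N : ℕ}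
    (h : k < N) :
    coeff k (sb w c) = ∑ n ∈ Finset.range N, coeff k (w ^ n) • coeff n c := by
  rw [sb, coeff_mk]
  refine Finset.sum_subset (Finset.range_mono h) fun n _ hn => ?_
  rw [coeff_pow_zero hw (by simpa using hn), zero_smul]

theorem sb_add (w : PowerSeries ℂ) (c d : PowerSeries B) : sb w (c + d) = sb w c + sb w d := by
  ext n; simp [sb, Finset.sum_add_distrib]

theorem sb_sub (w : PowerSeries ℂ) (c d : PowerSeries B) : sb w (c - d) = sb w c - sb w d := by
  ext n; simp [sb, smul_sub]

theorem sb_C (w : PowerSeries ℂ) (b : B) : sb w (C b) = C b := by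
  ext n
  simp only [sb, coeff_mk, coeff_C]
  rw [Finset.sum_eq_single 0]
  · rcases n with _ | n
    · simp
    · simp [coeff_one]
  · intro i _ hi; simp [hi]
  · intro h; simp at h

theorem sb_one (w : PowerSeries ℂ) : sb w (1 : PowerSeries B) = 1 := by
  have := sb_C w (1 : B); simpa using this

theorem sb_X_mul {w : PowerSeries ℂ} (hw : constantCoeff w = 0) (c : PowerSeries B) :
    sb w (X * c) = sc B w * sb w c := by
  ext k
  rw [coeff_sc_mul, coeff_sb hw _ (show k < k + 1 + 1 by omega), Finset.sum_range_succ']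
  simp only [coeff_succ_X_mul, coeff_zero_X_mul, smul_zero, add_zero]
  have h : ∀ p ∈ Finset.HasAntidiagonal.antidiagonal k, coeff p.1 w • coeff p.2 (sb w c) =
      ∑ n ∈ Finset.range (k + 1), (coeff p.1 w * coeff p.2 (w ^ n)) • coeff n c := by
    intro p hp
    have : p.2 < k + 1 := by
      have := Finset.HasAntidiagonal.mem_antidiagonal.1 hp; omega
    rw [coeff_sb hw c this, Finset.smul_sum]
    simp [smul_smul]
  rw [Finset.sum_congr rfl h, Finset.sum_comm]
  refine Finset.sum_congr rfl fun n _ => ?_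
  rw [pow_succ', coeff_mul, Finset.sum_smul]

theorem eq_zero_of_dvd (u : PowerSeries B) (h : ∀ N : ℕ, (X : PowerSeries B) ^ N ∣ u) : u = 0 := by
  ext n
  simpa using X_pow_dvd_iff.1 (h (n + 1)) n (by omega)

theorem X_dvd_sc {w : PowerSeries ℂ} (hw : constantCoeff w = 0) {N : ℕ} {u : PowerSeries B}
    (h : (X : PowerSeries B) ^ N ∣ u) : (X : PowerSeries B) ^ (N + 1) ∣ sc B w * u := by
  obtain ⟨w', rfl⟩ := X_dvd_iff.2 hw
  obtain ⟨u', rfl⟩ := h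
  refine ⟨sc B w' * u', ?_⟩
  rw [map_mul, sc_X, pow_succ']
  rw [mul_assoc X, mul_assoc X, ← mul_assoc (sc B w'), ← (X_pow_mul (φ := sc B w')), mul_assoc]

theorem sb_mul {w : PowerSeries ℂ} (hw : constantCoeff w = 0) (c d : PowerSeries B) :
    sb w (c * d) = sb w c * sb w d := by
  rw [← sub_eq_zero]
  apply eq_zero_of_dvd
  intro N
  induction N generalizing c with
  | zero => simp
  | succ N ih =>
    obtain ⟨c0, c1, rfl⟩ : ∃ c0 c1, c = C c0 + X * c1 :=
      ⟨_, _, (eq_X_mul_shift_add_const c).trans (add_comm _ _)⟩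
    have hC : ∀ (b : B) (e : PowerSeries B), sb w (C b * e) = C b * sb w e := by
      intro b e
      ext n
      simp [sb, Finset.mul_sum]
    have : sb w ((C c0 + X * c1) * d) - sb w (C c0 + X * c1) * sb w d
        = sc B w * (sb w (c1 * d) - sb w c1 * sb w d) := by
      rw [add_mul, sb_add, sb_add, sb_C, hC, mul_assoc X, sb_X_mul hw, sb_X_mul hw]
      noncomm_ring
    rw [this]
    exact X_dvd_sc hw (ih c1)

theorem ext_sb (φ : B →ₗ[ℂ] ℂ) (w : PowerSeries ℂ) (c : PowerSeries B) :
    ext φ (sb w c) = sb w (ext φ c) := by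
  ext n
  simp [coeff_ext, sb]

theorem sb_sc {w : PowerSeries ℂ} (f : PowerSeries ℂ) : sb w (sc B f) = sc B (sb w f) := by
  ext n
  simp [sb, sc, Algebra.smul_def]

theorem sc_self (f : PowerSeries ℂ) : sc ℂ f = f := by
  ext n; simp [sc]

theorem sb_X_self {w : PowerSeries ℂ} (hw : constantCoeff w = 0) : sb w (X : PowerSeries ℂ) = w := by
  have := sb_X_mul hw (1 : PowerSeries ℂ)
  rwa [sb_one, mul_one, mul_one, sc_self] at this

/-- Chain rule. -/
theorem sb_deriv {w : PowerSeries ℂ} (hw : constantCoeff w = 0) (c : PowerSeries ℂ) :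
    derivative ℂ (sb w c) = derivative ℂ w * sb w (derivative ℂ c) := by
  rw [← sub_eq_zero]
  apply eq_zero_of_dvd
  intro N
  induction N generalizing c with
  | zero => simp
  | succ N ih =>
    obtain ⟨c0, c1, rfl⟩ : ∃ c0 c1, c = C c0 + X * c1 :=
      ⟨_, _, (eq_X_mul_shift_add_const c).trans (add_comm _ _)⟩
    have : derivative ℂ (sb w (C c0 + X * c1)) -
          derivative ℂ w * sb w (derivative ℂ (C c0 + X * c1))
        = sc ℂ w * (derivative ℂ (sb w c1) - derivative ℂ w * sb w (derivative ℂ c1)) := by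
      rw [sb_add, sb_C, sb_X_mul hw, sc_self]
      simp only [map_add, Derivation.leibniz, derivative_C, derivative_X, smul_eq_mul, zero_add,
        mul_one]
      rw [sb_add, sb_X_mul hw, sc_self]
      ring
    rw [this]
    exact X_dvd_sc hw (ih c1)

/-! ### Fixed points -/

theorem exists_fixed (F : PowerSeries ℂ → PowerSeries ℂ)
    (hF : ∀ k u v, (X : PowerSeries ℂ) ^ k ∣ u - v → (X : PowerSeries ℂ) ^ (k + 1) ∣ F u - F v) :
    ∃ w, F w = w := by
  have h1 : ∀ k, (X : PowerSeries ℂ) ^ k ∣ F^[k + 1] 0 - F^[k] 0 := by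
    intro k
    induction k with
    | zero => simp
    | succ k ih =>
      rw [Function.iterate_succ_apply' F (k + 1), Function.iterate_succ_apply' F k]
      rw [Function.iterate_succ_apply' F k] at ih
      exact hF _ _ _ ih
  have h2 : ∀ j k, (X : PowerSeries ℂ) ^ k ∣ F^[k + j] 0 - F^[k] 0 := by
    intro j k
    induction j with
    | zero => simp
    | succ j ih =>
      have := (pow_dvd_pow X (Nat.le_add_right k j)).trans (h1 (k + j))
      simpa [add_assoc] using dvd_add this ih
  let w : PowerSeries ℂ := PowerSeries.mk fun k => coeff k (F^[k + 1] 0)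
  have h3 : ∀ k, (X : PowerSeries ℂ) ^ k ∣ w - F^[k] 0 := by
    intro k
    rw [X_pow_dvd_iff]
    intro m hm
    obtain ⟨j, rfl⟩ := Nat.exists_eq_add_of_lt hm
    have := X_pow_dvd_iff.1 (h2 j (m + 1)) m (by omega)
    rw [map_sub, sub_eq_zero] at this
    rw [map_sub, sub_eq_zero]
    simp only [w, coeff_mk]
    rw [← this, show m + 1 + j = m + j + 1 by omega]
  refine ⟨w, ?_⟩
  rw [← sub_eq_zero]
  apply eq_zero_of_dvd
  intro N
  have a := hF _ _ _ (h3 N)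
  have b := h3 (N + 1)
  rw [Function.iterate_succ_apply'] at b
  have := dvd_sub a b
  rw [show F w - F (F^[N] 0) - (w - F (F^[N] 0)) = F w - w by ring] at this
  exact (pow_dvd_pow X (Nat.le_succ N)).trans this

theorem sb_congr (c : PowerSeries ℂ) {k : ℕ} {u v : PowerSeries ℂ}
    (h : (X : PowerSeries ℂ) ^ k ∣ u - v) : (X : PowerSeries ℂ) ^ k ∣ sb u c - sb v c := by
  rw [X_pow_dvd_iff]
  intro m hm
  simp only [sb, map_sub, coeff_mk]
  rw [← Finset.sum_sub_distrib]
  refine Finset.sum_eq_zero fun n _ => ?_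
  have := X_pow_dvd_iff.1 (h.trans (sub_dvd_pow_sub_pow u v n)) m hm
  rw [← sub_smul, ← map_sub, this, zero_smul]

theorem exists_omega (f g : PowerSeries ℂ) :
    ∃ w₁ w₂ : PowerSeries ℂ, w₁ = X * sb w₂ g ∧ w₂ = X * sb w₁ f := by
  obtain ⟨w, hw⟩ := exists_fixed (fun u => X * sb (X * sb u f) g) (by
    intro k u v h
    have h1 := sb_congr f h
    have h2 : (X : PowerSeries ℂ) ^ k ∣ X * sb u f - X * sb v f := by
      rw [← mul_sub]; exact h1.mul_left _
    have h3 := sb_congr g h2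
    rw [← mul_sub, pow_succ']
    exact mul_dvd_mul_left _ h3)
  exact ⟨w, X * sb w f, hw.symm, rfl⟩

end Series

/-! ### One variable -/

section OneVariable

open PowerSeries

theorem invMK_series {m t : ℕ → ℂ} (h : IsInvMK m t) :
    (PowerSeries.mk t) * (PowerSeries.mk m) = derivative ℂ (X * PowerSeries.mk m) := by
  ext n
  rw [coeff_mul, coeff_derivative, coeff_succ_X_mul, coeff_mk, mul_comm, h n,
    Finset.Nat.sum_antidiagonal_eq_sum_range_succ_mk]
  simp

theorem geom_mul (a : B) :
    (1 - X * C a) * (PowerSeries.mk fun n => a ^ n) = 1 := by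
  ext n
  rw [sub_mul, one_mul, map_sub, mul_assoc, coeff_mk]
  rcases n with _ | n
  · simp
  · simp [coeff_succ_X_mul, coeff_one, pow_succ']

theorem geom_mul' (a : B) :
    (PowerSeries.mk fun n => a ^ n) * (1 - X * C a) = 1 := by
  ext n
  rw [mul_sub, mul_one, map_sub, ← mul_assoc, (commute_X _).eq, mul_assoc, coeff_mk]
  rcases n with _ | n
  · simp
  · simp [coeff_succ_X_mul, coeff_one, pow_succ]

theorem sc_C (c : ℂ) : sc B (C c) = C (algebraMap ℂ B c) := by simp [sc]

theorem single (φ φ' : B →ₗ[ℂ] ℂ) (hφ1 : φ 1 = 1) (hφ'1 : φ' 1 = 0) (a : B) (t : ℕ → ℂ)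
    (ht : IsInvMK (fun n => φ (a ^ n)) t)
    (hb : ∀ n : ℕ, 0 < n → φ' (a ^ n) = φ (a ^ n) - t n) :
    ∃ (f : PowerSeries ℂ) (x : PowerSeries B),
      (∀ n, coeff n x ∈ Algebra.adjoin ℂ {a}) ∧ ext φ x = 0 ∧
      ext φ (x * x) = derivative ℂ f ∧ ext φ' x = - (X * derivative ℂ f) ∧
      (1 - X * C a) * (1 + X * x) = 1 - sc B (X * f) ∧
      (1 + X * x) * (1 - X * C a) = 1 - sc B (X * f) := by
  set M : PowerSeries ℂ := PowerSeries.mk fun n => φ (a ^ n) with hM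
  set T : PowerSeries ℂ := PowerSeries.mk t with hT
  set G : PowerSeries B := PowerSeries.mk fun n => a ^ n with hG
  have hTM : T * M = derivative ℂ (X * M) := invMK_series ht
  have t0 : t 0 = 1 := by
    have := ht 0
    simpa [hφ1] using this.symm
  have hM0 : constantCoeff M = 1 := by
    simp [hM, hφ1]
  obtain ⟨N, hN⟩ : ∃ N, M = 1 + X * N := by
    have := eq_X_mul_shift_add_const M
    rw [hM0, add_comm, map_one] at this
    exact ⟨_, this⟩
  have hinv : M⁻¹ * M = 1 := PowerSeries.inv_mul_cancel M (by rw [hM0]; exact one_ne_zero)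
  have hfM : (1 - X * (N * M⁻¹)) * M = 1 := by
    linear_combination (-X * N) * hinv + hN
  generalize N * M⁻¹ = f at hfM
  have eG : ext φ G = M := by ext n; simp [coeff_ext, hG, hM]
  have eGG : ext φ (G * G) = derivative ℂ (X * M) := by
    ext n
    rw [coeff_ext, coeff_mul, coeff_derivative, coeff_succ_X_mul]
    have : ∀ p ∈ Finset.HasAntidiagonal.antidiagonal n, coeff p.1 G * coeff p.2 G = a ^ n := by
      intro p hp
      rw [hG, coeff_mk, coeff_mk, ← pow_add, Finset.HasAntidiagonal.mem_antidiagonal.1 hp]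
    rw [Finset.sum_congr rfl this, Finset.sum_const, Finset.Nat.card_antidiagonal, map_nsmul,
      nsmul_eq_mul, hM, coeff_mk, mul_comm]
    push_cast
    rfl
  have eG' : ext φ' G = M - T := by
    ext n
    rcases Nat.eq_zero_or_pos n with rfl | hn
    · simp [coeff_ext, hG, hM, hT, hφ1, hφ'1, t0]
    · simp [coeff_ext, hG, hM, hT, hb n hn]
  -- the element x
  set x : PowerSeries B := PowerSeries.mk fun n => coeff (n + 1) (sc B (1 - X * f) * G) with hx
  have hXx : 1 + X * x = sc B (1 - X * f) * G := by
    rw [eq_X_mul_shift_add_const (sc B (1 - X * f) * G), add_comm]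
    congr 1
    rw [← coeff_zero_eq_constantCoeff_apply, coeff_sc_mul]
    simp [hG]
  have hmem : ∀ n, coeff n x ∈ Algebra.adjoin ℂ {a} := by
    intro n
    rw [hx, coeff_mk, coeff_sc_mul]
    refine sum_mem fun p _ => Subalgebra.smul_mem _ ?_ _
    rw [hG, coeff_mk]
    exact Subalgebra.pow_mem _ (Algebra.self_mem_adjoin_singleton ℂ a) _
  have hgeo : (1 - X * C a) * G = 1 := geom_mul a
  have hgeo' : G * (1 - X * C a) = 1 := geom_mul' a
  clear_value x G M T
  have hXx' : X * x = sc B (1 - X * f) * G - 1 := by rw [← hXx]; simp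
  have hMd : derivative ℂ (X * M) = M + X * derivative ℂ M := by
    simp [Derivation.leibniz]; ring
  have hd : (1 - X * f) * derivative ℂ M = M * (f + X * derivative ℂ f) := by
    have := congrArg (derivative ℂ) hfM
    simp [Derivation.leibniz] at this
    linear_combination this
  have hd2 : (1 - X * f) ^ 2 * derivative ℂ M = f + X * derivative ℂ f := by
    linear_combination (1 - X * f) * hd + (f + X * derivative ℂ f) * hfM
  refine ⟨f, x, ?_, ?_, ?_, ?_, ?_, ?_⟩
  · exact hmem
  · apply X_mul_cancel
    rw [← ext_X, hXx', ext_sub, ext_sc, eG, ext_one, hφ1, hfM]; simp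
  · apply X_mul_cancel
    apply X_mul_cancel
    have h1 : X * (X * (x * x)) =
        sc B ((1 - X * f) ^ 2) * (G * G) - sc B (2 * (1 - X * f)) * G + 1 := by
      have : X * (X * (x * x)) = (X * x) * (X * x) := by
        rw [mul_assoc X x, ← mul_assoc x X, (commute_X x).eq, mul_assoc X x x]
      rw [this, hXx', map_mul, map_ofNat, sq, map_mul]
      have hc : G * sc B (1 - X * f) = sc B (1 - X * f) * G := (sc_comm _ _).symm
      generalize sc B (1 - X * f) = s at hc
      have : s * G * (s * G) = s * s * (G * G) := by
        rw [mul_assoc, ← mul_assoc G, hc]; noncomm_ring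
      rw [sub_mul, mul_sub, this]
      noncomm_ring
    rw [← ext_X, ← ext_X, h1, ext_add, ext_sub, ext_sc, ext_sc, eGG, eG, hMd, ext_one, hφ1]
    simp only [map_one]
    linear_combination X * hd2 + (1 - X * f - 2) * hfM
  · apply X_mul_cancel
    rw [← ext_X, hXx', ext_sub, ext_sc, eG', ext_one, hφ'1]
    simp only [map_zero]
    have hT' : T = (1 - X * f) * derivative ℂ (X * M) := by
      linear_combination (1 - X * f) * hTM - T * hfM
    rw [hT', hMd]
    linear_combination (-X) * hd2 + (1 - (1 - X * f)) * hfM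
  · rw [hXx, ← mul_assoc, ← sc_comm, mul_assoc, hgeo, mul_one, map_sub, map_one]
  · rw [hXx, mul_assoc, hgeo', mul_one, map_sub, map_one]

end OneVariable

/-! ### Alternating centered words -/

section Words

/-- Alternating index. -/
def aidx (i : Bool) (k : ℕ) : Bool := if Even k then i else !i

theorem aidx_zero (i : Bool) : aidx i 0 = i := by simp [aidx]

theorem aidx_succ (i : Bool) (k : ℕ) : aidx i (k + 1) = aidx (!i) k := by
  unfold aidx
  simp only [Nat.even_add_one]
  by_cases h : Even k <;> simp [h]

theorem aidx_succ' (i : Bool) (k : ℕ) : aidx i (k + 1) = !(aidx i k) := by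
  unfold aidx
  simp only [Nat.even_add_one]
  by_cases h : Even k <;> simp [h]

/-- `w` is an alternating word of length `n + 1` in centered elements with first index `i`. -/
def Word (φ : B →ₗ[ℂ] ℂ) (Alg : Bool → Set B) (i : Bool) (n : ℕ) (w : B) : Prop :=
  ∃ u : ℕ → B, (∀ k ≤ n, u k ∈ Alg (aidx i k)) ∧ (∀ k ≤ n, φ (u k) = 0) ∧
    w = (List.ofFn fun k : Fin (n + 1) => u k).prod

variable {φ φ' : B →ₗ[ℂ] ℂ} {Alg : Bool → Set B}

theorem word_single {i : Bool} {c : B} (hc : c ∈ Alg i) (h0 : φ c = 0) :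
    Word φ Alg i 0 c := by
  refine ⟨fun _ => c, ?_, ?_, ?_⟩
  · intro k hk
    obtain rfl : k = 0 := by omega
    simpa [aidx_zero] using hc
  · intro k _; exact h0
  · simp

theorem word_cons {i : Bool} {n : ℕ} {w c : B} (hw : Word φ Alg i n w) (hc : c ∈ Alg (!i))
    (h0 : φ c = 0) : Word φ Alg (!i) (n + 1) (c * w) := by
  obtain ⟨u, h1, h2, rfl⟩ := hw
  refine ⟨fun k => Nat.casesOn k c u, ?_, ?_, ?_⟩
  · rintro (_ | k) hk
    · simpa [aidx_zero] using hc
    · rw [aidx_succ, Bool.not_not]; exact h1 k (by omega)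
  · rintro (_ | k) hk
    · exact h0
    · exact h2 k (by omega)
  · rw [List.ofFn_succ (n := n + 1), List.prod_cons]
    rfl

theorem word_snoc {i : Bool} {n : ℕ} {w d : B} (hw : Word φ Alg i n w)
    (hd : d ∈ Alg (aidx i (n + 1)))
    (h0 : φ d = 0) : Word φ Alg i (n + 1) (w * d) := by
  obtain ⟨u, h1, h2, rfl⟩ := hw
  refine ⟨fun k => if k ≤ n then u k else d, ?_, ?_, ?_⟩
  · intro k hk
    by_cases h : k ≤ n
    · simp only [h, if_true]; exact h1 k h
    · obtain rfl : k = n + 1 := by omega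
      simpa using hd
  · intro k hk
    by_cases h : k ≤ n
    · simp only [h, if_true]; exact h2 k h
    · simp only [h, if_false]; exact h0
  · rw [List.ofFn_succ' (n := n + 1), List.concat_eq_append, List.prod_append]
    congr 1
    · congr 2
      funext k
      have : (k : ℕ) ≤ n := by have := k.2; omega
      simp [this]
    · simp

theorem word_phi (h : IsInfFree ⇑φ ⇑φ' Alg) {i : Bool} {n : ℕ} {w : B} (hw : Word φ Alg i n w) :
    φ w = 0 := by
  obtain ⟨u, h1, h2, rfl⟩ := hw
  refine h.1 n (fun k => aidx i k) (fun k => u k) ?_ ?_ ?_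
  · intro k; simp [aidx_succ']
  · intro k; exact h1 k (by have := k.2; omega)
  · intro k; exact h2 k (by have := k.2; omega)

theorem word_phi'_odd (h : IsInfFree ⇑φ ⇑φ' Alg) {i : Bool} {n : ℕ} {w : B}
    (hw : Word φ Alg i n w) (hn : ¬ Even n) :
    φ' w = 0 := by
  obtain ⟨u, h1, h2, rfl⟩ := hw
  refine h.2.1 n (fun k => aidx i k) (fun k => u k) ?_ ?_ ?_ ?_
  · intro k; simp [aidx_succ']
  · intro k; exact h1 k (by have := k.2; omega)
  · intro k; exact h2 k (by have := k.2; omega)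
  · intro h; exact hn h.1

theorem word_phi'_even (h : IsInfFree ⇑φ ⇑φ' Alg) {i : Bool} {m : ℕ} (u : ℕ → B)
    (h1 : ∀ k ≤ 2 * m, u k ∈ Alg (aidx i k)) (h2 : ∀ k ≤ 2 * m, φ (u k) = 0) :
    φ' (List.ofFn fun k : Fin (2 * m + 1) => u k).prod =
      (∏ j ∈ Finset.range m, φ (u j * u (2 * m - j))) * φ' (u m) := by
  rw [h.2.2 m (fun k => aidx i k) (fun k => u k)]
  · congr 1
    rw [← Fin.prod_univ_eq_prod_range (fun j => φ (u j * u (2 * m - j)))]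
    refine Finset.prod_congr rfl fun j _ => ?_
    simp only [Fin.val_rev, Fin.val_castLE]
    congr 3
    omega
  · intro k; simp [aidx_succ']
  · intro k; exact h1 k (by have := k.2; omega)
  · intro k; exact h2 k (by have := k.2; omega)
  · intro k
    have : Even (k : ℕ) ↔ Even (k.rev : ℕ) := by
      have := k.2
      rw [Fin.val_rev, Nat.even_iff, Nat.even_iff]; omega
    simp only [aidx, this]

theorem word_phi'_wrap (h : IsInfFree ⇑φ ⇑φ' Alg) {i : Bool} {n : ℕ} {w c d : B}
    (hw : Word φ Alg i n w) (hn : Even n) (hc : c ∈ Alg (!i)) (hd : d ∈ Alg (!i))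
    (c0 : φ c = 0) (d0 : φ d = 0) :
    φ' (c * w * d) = φ (c * d) * φ' w := by
  obtain ⟨m, rfl⟩ : ∃ m, n = 2 * m := ⟨n / 2, by have := Nat.even_iff.1 hn; omega⟩
  obtain ⟨u, h1, h2, rfl⟩ := hw
  rw [word_phi'_even h u h1 h2]
  let v : ℕ → B := fun k => Nat.casesOn k c fun k => if k ≤ 2 * m then u k else d
  have hv0 : v 0 = c := rfl
  have hv1 : ∀ k ≤ 2 * m, v (k + 1) = u k := fun k hk => by simp [v, hk]
  have hv2 : v (2 * m + 1 + 1) = d := by simp [v]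
  have e : c * (List.ofFn fun k : Fin (2 * m + 1) => u k).prod * d =
      (List.ofFn fun k : Fin (2 * (m + 1) + 1) => v k).prod := by
    change _ = (List.ofFn fun k : Fin (2 * m + 1 + 1 + 1) => v k).prod
    rw [List.ofFn_succ (n := 2 * m + 1 + 1), List.prod_cons, List.ofFn_succ' (n := 2 * m + 1),
      List.concat_eq_append, List.prod_append]
    simp only [Fin.val_zero, Fin.val_succ, Fin.val_castSucc, Fin.val_last, hv0, hv2,
      List.prod_singleton, mul_assoc]
    congr 3; apply congrArg
    funext k
    rw [hv1 k (by have := k.2; omega)]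
  rw [e, word_phi'_even h (i := !i) v]
  · rw [Finset.prod_range_succ', hv0, show 2 * (m + 1) - 0 = 2 * m + 1 + 1 by omega, hv2,
      hv1 m (by omega)]
    have : ∀ j ∈ Finset.range m, φ (v (j + 1) * v (2 * (m + 1) - (j + 1))) =
        φ (u j * u (2 * m - j)) := by
      intro j hj
      have := Finset.mem_range.1 hj
      rw [hv1 j (by omega), show 2 * (m + 1) - (j + 1) = 2 * m - j + 1 by omega,
        hv1 _ (by omega)]
    rw [Finset.prod_congr rfl this]
    ring
  · rintro (_ | k) hk
    · simpa [aidx_zero, hv0] using hc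
    · rw [aidx_succ, Bool.not_not]
      by_cases hk' : k ≤ 2 * m
      · rw [hv1 k hk']; exact h1 k hk'
      · obtain rfl : k = 2 * m + 1 := by omega
        rw [hv2, aidx_succ']
        simpa [aidx] using hd
  · rintro (_ | k) hk
    · exact c0
    · by_cases hk' : k ≤ 2 * m
      · rw [hv1 k hk']; exact h2 k hk'
      · obtain rfl : k = 2 * m + 1 := by omega
        rw [hv2]; exact d0

/-- Span of alternating centered words with first index `i` and parity of length given by `e`
(`e = true` : odd length). -/
def Wd (φ : B →ₗ[ℂ] ℂ) (Alg : Bool → Set B) (i e : Bool) : Submodule ℂ B :=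
  Submodule.span ℂ {w | ∃ n, (Even n ↔ e = true) ∧ Word φ Alg i n w}

/-- Centered elements. -/
def Cen (φ : B →ₗ[ℂ] ℂ) (Alg : Bool → Set B) (i : Bool) : Set B := {c | c ∈ Alg i ∧ φ c = 0}

theorem wd_of_cen {i : Bool} {c : B} (hc : c ∈ Cen φ Alg i) : c ∈ Wd φ Alg i true :=
  Submodule.subset_span ⟨0, by simp, word_single hc.1 hc.2⟩

theorem wd_cons {i e : Bool} {c w : B} (hc : c ∈ Cen φ Alg (!i)) (hw : w ∈ Wd φ Alg i e) :
    c * w ∈ Wd φ Alg (!i) (!e) := by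
  induction hw using Submodule.span_induction with
  | mem x hx =>
    obtain ⟨n, hn, hx⟩ := hx
    refine Submodule.subset_span ⟨n + 1, ?_, word_cons hx hc.1 hc.2⟩
    rw [Nat.even_add_one, hn]; cases e <;> simp
  | zero => simp
  | add x y _ _ hx hy => rw [mul_add]; exact add_mem hx hy
  | smul r x _ hx => rw [mul_smul_comm]; exact Submodule.smul_mem _ _ hx

theorem wd_snoc {i e : Bool} {d w : B} (hd : d ∈ Cen φ Alg (if e then !i else i))
    (hw : w ∈ Wd φ Alg i e) :
    w * d ∈ Wd φ Alg i (!e) := by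
  induction hw using Submodule.span_induction with
  | mem x hx =>
    obtain ⟨n, hn, hx⟩ := hx
    refine Submodule.subset_span ⟨n + 1, ?_, word_snoc hx ?_ hd.2⟩
    · rw [Nat.even_add_one, hn]; cases e <;> simp
    · have := hd.1
      unfold aidx
      simp only [Nat.even_add_one, hn]
      cases e <;> simpa using this
  | zero => simp
  | add x y _ _ hx hy => rw [add_mul]; exact add_mem hx hy
  | smul r x _ hx => rw [smul_mul_assoc]; exact Submodule.smul_mem _ _ hx

theorem wd_phi (h : IsInfFree ⇑φ ⇑φ' Alg) {i e : Bool} {w : B} (hw : w ∈ Wd φ Alg i e) :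
    φ w = 0 := by
  induction hw using Submodule.span_induction with
  | mem x hx => obtain ⟨n, hn, hx⟩ := hx; exact word_phi h hx
  | zero => simp
  | add x y _ _ hx hy => simp [hx, hy]
  | smul r x _ hx => simp [hx]

theorem wd_phi' (h : IsInfFree ⇑φ ⇑φ' Alg) {i : Bool} {w : B} (hw : w ∈ Wd φ Alg i false) :
    φ' w = 0 := by
  induction hw using Submodule.span_induction with
  | mem x hx => obtain ⟨n, hn, hx⟩ := hx; exact word_phi'_odd h hx (by simp [hn])
  | zero => simp
  | add x y _ _ hx hy => simp [hx, hy]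
  | smul r x _ hx => simp [hx]

theorem wd_wrap (h : IsInfFree ⇑φ ⇑φ' Alg) {i : Bool} {c w d : B} (hc : c ∈ Cen φ Alg (!i))
    (hd : d ∈ Cen φ Alg (!i)) (hw : w ∈ Wd φ Alg i true) :
    φ' (c * w * d) = φ (c * d) * φ' w := by
  induction hw using Submodule.span_induction with
  | mem x hx =>
    obtain ⟨n, hn, hx⟩ := hx
    exact word_phi'_wrap h hx (by simp [hn]) hc.1 hd.1 hc.2 hd.2
  | zero => simp
  | add x y _ _ hx hy => simp [mul_add, add_mul, hx, hy]
  | smul r x _ hx => simp [hx]; ring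

open PowerSeries

theorem coeff_mul_mem_s16 (S S' : Set B) (S'' : Submodule ℂ B)
    (hS : ∀ c ∈ S, ∀ d ∈ S', c * d ∈ S'') {u v : PowerSeries B} {N : ℕ}
    (hu : ∀ n ≤ N, coeff n u ∈ S) (hv : ∀ n ≤ N, coeff n v ∈ S') :
    ∀ n ≤ N, coeff n (u * v) ∈ S'' := by
  intro n hn
  rw [coeff_mul]
  refine sum_mem fun p hp => ?_
  have := Finset.HasAntidiagonal.mem_antidiagonal.1 hp
  exact hS _ (hu _ (by omega)) _ (hv _ (by omega))

theorem sum_triple (F : ℕ → ℕ → ℕ → ℂ) (n : ℕ) :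
    ∑ p ∈ Finset.HasAntidiagonal.antidiagonal n,
      ∑ q ∈ Finset.HasAntidiagonal.antidiagonal p.1, F q.1 q.2 p.2 =
    ∑ p ∈ Finset.HasAntidiagonal.antidiagonal n,
      ∑ q ∈ Finset.HasAntidiagonal.antidiagonal p.1, F q.1 p.2 q.2 := by
  rw [Finset.sum_sigma', Finset.sum_sigma']
  refine Finset.sum_nbij' (fun s => ⟨(s.2.1 + s.1.2, s.2.2), (s.2.1, s.1.2)⟩)
    (fun s => ⟨(s.2.1 + s.1.2, s.2.2), (s.2.1, s.1.2)⟩) ?_ ?_ ?_ ?_ ?_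
  · rintro ⟨⟨a, b⟩, ⟨c, d⟩⟩ h
    simp at h ⊢; omega
  · rintro ⟨⟨a, b⟩, ⟨c, d⟩⟩ h
    simp at h ⊢; omega
  · rintro ⟨⟨a, b⟩, ⟨c, d⟩⟩ h
    simp at h; simp [h.2]
  · rintro ⟨⟨a, b⟩, ⟨c, d⟩⟩ h
    simp at h; simp [h.2]
  · rintro ⟨⟨a, b⟩, ⟨c, d⟩⟩ h
    rfl

theorem ext_wrap (h : IsInfFree ⇑φ ⇑φ' Alg) {i : Bool} {u w v : PowerSeries B}
    (hu : ∀ n, coeff n u ∈ Cen φ Alg (!i))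
    (hv : ∀ n, coeff n v ∈ Cen φ Alg (!i)) (hw : ∀ n, coeff n w ∈ Wd φ Alg i true) :
    ext φ' (u * w * v) = ext φ (u * v) * ext φ' w := by
  ext n
  rw [coeff_ext, coeff_mul, coeff_mul]
  simp only [coeff_mul, coeff_ext, map_sum, Finset.sum_mul]
  rw [← sum_triple (fun i j k => φ (coeff i u * coeff k v) * φ' (coeff j w))]
  refine Finset.sum_congr rfl fun p _ => Finset.sum_congr rfl fun q _ => ?_
  exact wd_wrap h (hu _) (hv _) (hw _)

end Words

/-! ### The resolvent identity -/

section Resolvent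

theorem resolvent_abs {R S : Type*} [CommRing R] [Ring S] [Algebra R S]
    (z w₁ w₂ g₁ g₂ M : R) (a b x y H : S)
    (h₁ : w₁ = z * g₂) (h₂ : w₂ = z * g₁)
    (hA : (1 - w₁ • a) * (1 + w₁ • x) = (1 - w₁ * g₁) • (1 : S))
    (hA' : (1 + w₁ • x) * (1 - w₁ • a) = (1 - w₁ * g₁) • (1 : S))
    (hB : (1 - w₂ • b) * (1 + w₂ • y) = (1 - w₂ * g₂) • (1 : S))
    (hB' : (1 + w₂ • y) * (1 - w₂ • b) = (1 - w₂ * g₂) • (1 : S))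
    (hx : (1 - w₁ • a) * x = a - g₁ • (1 : S))
    (hy : y * (1 - w₂ • b) = b - g₂ • (1 : S))
    (hM : (1 - w₁ * g₁) * M = 1)
    (hH : (1 - z • (a * b)) * H = 1) (hH' : H * (1 - z • (a * b)) = 1) :
    ∃ K : S, (1 - z • (x * y)) * K = 1 ∧ K * (1 - z • (x * y)) = 1 ∧
      (1 + w₂ • y) * K * (1 + w₁ • x) = (1 - w₁ * g₁) • H := by
  have hη : w₂ * g₂ = w₁ * g₁ := by rw [h₁, h₂]; ring
  rw [hη] at hB hB'
  have key : (1 - w₁ • a) * (1 - z • (x * y)) * (1 - w₂ • b) =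
      (1 - w₁ * g₁) • (1 - z • (a * b)) := by
    have e : (1 - w₁ • a) * (1 - z • (x * y)) * (1 - w₂ • b) =
        (1 - w₁ • a) * (1 - w₂ • b) - z • (((1 - w₁ • a) * x) * (y * (1 - w₂ • b))) := by
      simp only [mul_sub, sub_mul, mul_one, one_mul, smul_mul_assoc, mul_smul_comm, mul_assoc,
        smul_sub]
      module
    rw [e, hx, hy, h₁, h₂]
    simp only [mul_sub, sub_mul, mul_one, one_mul, smul_mul_assoc, mul_smul_comm]
    module
  generalize hη' : 1 - w₁ * g₁ = s at *
  generalize 1 - w₁ • a = A at *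
  generalize 1 + w₁ • x = A' at *
  generalize 1 - w₂ • b = C at *
  generalize 1 + w₂ • y = C' at *
  generalize 1 - z • (x * y) = Q at *
  generalize 1 - z • (a * b) = P at *
  have hM' : M * s = 1 := by rw [mul_comm, hM]
  -- cancel s
  have canc : ∀ u v : S, s • u = s • v → u = v := by
    intro u v h
    have := congrArg (fun t => M • t) h
    simpa [smul_smul, hM'] using this
  have q1 : Q * C * H * A = s • (1 : S) := by
    apply canc
    calc s • (Q * C * H * A) = (s • (1 : S)) * Q * C * H * A := by simp
      _ = A' * (A * Q * C) * H * A := by rw [← hA']; noncomm_ring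
      _ = s • (A' * (P * H) * A) := by rw [key]; simp [mul_assoc]
      _ = s • s • (1 : S) := by rw [hH, mul_one, hA']
  have q2 : C * H * A * Q = s • (1 : S) := by
    apply canc
    calc s • (C * H * A * Q) = C * H * A * Q * (s • (1 : S)) := by simp
      _ = C * H * (A * Q * C) * C' := by rw [← hB]; noncomm_ring
      _ = s • (C * (H * P) * C') := by rw [key]; simp [mul_assoc]
      _ = s • s • (1 : S) := by rw [hH', mul_one, hB]
  refine ⟨M • (C * H * A), ?_, ?_, ?_⟩
  · rw [mul_smul_comm, ← mul_assoc, ← mul_assoc, q1, smul_smul, hM', one_smul]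
  · rw [smul_mul_assoc, q2, smul_smul, hM', one_smul]
  · calc C' * (M • (C * H * A)) * A' = M • ((C' * C) * H * (A * A')) := by
          simp [mul_assoc]
      _ = s • H := by rw [hA, hB']; simp [smul_smul, ← mul_assoc, hM']

theorem resolvent_hom {R S : Type*} [CommRing R] [Ring S] (ι : R →+* S)
    (hι : ∀ r s, ι r * s = s * ι r)
    (z w₁ w₂ g₁ g₂ M : R) (a b x y H : S)
    (h₁ : w₁ = z * g₂) (h₂ : w₂ = z * g₁)
    (hA : (1 - ι w₁ * a) * (1 + ι w₁ * x) = 1 - ι (w₁ * g₁))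
    (hA' : (1 + ι w₁ * x) * (1 - ι w₁ * a) = 1 - ι (w₁ * g₁))
    (hB : (1 - ι w₂ * b) * (1 + ι w₂ * y) = 1 - ι (w₂ * g₂))
    (hB' : (1 + ι w₂ * y) * (1 - ι w₂ * b) = 1 - ι (w₂ * g₂))
    (hx : (1 - ι w₁ * a) * x = a - ι g₁)
    (hy : y * (1 - ι w₂ * b) = b - ι g₂)
    (hM : (1 - w₁ * g₁) * M = 1)
    (hH : (1 - ι z * (a * b)) * H = 1) (hH' : H * (1 - ι z * (a * b)) = 1) :
    ∃ K : S, (1 - ι z * (x * y)) * K = 1 ∧ K * (1 - ι z * (x * y)) = 1 ∧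
      (1 + ι w₂ * y) * K * (1 + ι w₁ * x) = ι (1 - w₁ * g₁) * H := by
  let _ : Algebra R S := ι.toAlgebra' hι
  have e : ∀ (r : R) (s : S), r • s = ι r * s := fun _ _ => rfl
  have := resolvent_abs z w₁ w₂ g₁ g₂ M a b x y H h₁ h₂
    (by simpa [e] using hA) (by simpa [e] using hA') (by simpa [e] using hB)
    (by simpa [e] using hB') (by simpa [e] using hx) (by simpa [e] using hy) hM
    (by simpa [e] using hH) (by simpa [e] using hH')
  simpa only [e] using this

end Resolvent

section Final

open PowerSeries

/-- Transport of the one variable data along a substitution. -/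
theorem single_sb (φ φ' : B →ₗ[ℂ] ℂ) (Alg : Bool → Set B) (i : Bool) (a : B)
    (hAlg : Alg i = (Algebra.adjoin ℂ {a} : Set B))
    (f : PowerSeries ℂ) (x : PowerSeries B)
    (hmem : ∀ n, coeff n x ∈ Algebra.adjoin ℂ {a}) (h0 : ext φ x = 0)
    (h2 : ext φ (x * x) = derivative ℂ f) (h1 : ext φ' x = - (X * derivative ℂ f))
    (hA : (1 - X * C a) * (1 + X * x) = 1 - sc B (X * f))
    (hA' : (1 + X * x) * (1 - X * C a) = 1 - sc B (X * f))
    (w : PowerSeries ℂ) (hw : constantCoeff w = 0) :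
    ∃ (p : PowerSeries ℂ) (y : PowerSeries B),
      (∀ n, coeff n y ∈ Cen φ Alg i) ∧ ext φ (y * y) = p ∧ ext φ' y = - (w * p) ∧
      derivative ℂ (sb w f) = derivative ℂ w * p ∧
      (1 - sc B w * C a) * (1 + sc B w * y) = 1 - sc B (w * sb w f) ∧
      (1 + sc B w * y) * (1 - sc B w * C a) = 1 - sc B (w * sb w f) ∧
      (1 - sc B w * C a) * y = C a - sc B (sb w f) ∧
      y * (1 - sc B w * C a) = C a - sc B (sb w f) := by
  have hx : (1 - X * C a) * x = C a - sc B f := by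
    apply X_mul_cancel
    have e : X * ((1 - X * C a) * x) = (1 - X * C a) * (1 + X * x) - (1 - X * C a) := by
      rw [← mul_assoc, ← (commute_X (1 - X * C a)).eq]; noncomm_ring
    rw [e, hA, map_mul, sc_X]; noncomm_ring
  have hx' : x * (1 - X * C a) = C a - sc B f := by
    apply X_mul_cancel
    have e : X * (x * (1 - X * C a)) = (1 + X * x) * (1 - X * C a) - (1 - X * C a) := by
      noncomm_ring
    rw [e, hA', map_mul, sc_X]; noncomm_ring
  have s1 : sb w (1 - X * C a) = 1 - sc B w * C a := by
    rw [sb_sub, sb_one, sb_X_mul hw, sb_C]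
  have s2 : sb w (1 + X * x) = 1 + sc B w * sb w x := by
    rw [sb_add, sb_one, sb_X_mul hw]
  have s3 : sb w (1 - sc B (X * f)) = 1 - sc B (w * sb w f) := by
    rw [sb_sub, sb_one, sb_sc, sb_X_mul hw, sc_self]
  have s4 : sb w (C a - sc B f) = C a - sc B (sb w f) := by
    rw [sb_sub, sb_C, sb_sc]
  refine ⟨sb w (derivative ℂ f), sb w x, ?_, ?_, ?_, sb_deriv hw f, ?_, ?_, ?_, ?_⟩
  · intro n
    constructor
    · rw [hAlg, sb, coeff_mk]
      exact sum_mem fun k _ => Subalgebra.smul_mem _ (hmem k) _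
    · have : ext φ (sb w x) = 0 := by
        rw [ext_sb, h0]; ext n; simp [sb]
      rw [← coeff_ext, this]; simp
  · rw [← sb_mul hw, ext_sb, h2]
  · rw [ext_sb, h1, ← zero_sub, sb_sub, sb_X_mul hw, sc_self,
      show sb w (0 : PowerSeries ℂ) = 0 by ext n; simp [sb], zero_sub]
  · rw [← s1, ← s2, ← s3, ← sb_mul hw, hA]
  · rw [← s1, ← s2, ← s3, ← sb_mul hw, hA']
  · rw [← s1, ← s4, ← sb_mul hw, hx]
  · rw [← s1, ← s4, ← sb_mul hw, hx']

/-- The functionals evaluated on the resolvent `K`. -/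
theorem resolvent_eval {φ φ' : B →ₗ[ℂ] ℂ} {Alg : Bool → Set B} (h : IsInfFree ⇑φ ⇑φ' Alg)
    (hφ1 : φ 1 = 1) (hφ'1 : φ' 1 = 0) (x y K : PowerSeries B)
    (hx : ∀ n, coeff n x ∈ Cen φ Alg true) (hy : ∀ n, coeff n y ∈ Cen φ Alg false)
    (hK : (1 - X * (x * y)) * K = 1) (hK' : K * (1 - X * (x * y)) = 1) :
    ext φ K = 1 ∧ ext φ (y * K) = 0 ∧ ext φ (K * x) = 0 ∧ ext φ (y * K * x) = 0 ∧
    ext φ' K = 0 ∧ ext φ' (y * K * x) = 0 ∧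
    ext φ' (y * K) = ext φ' y + X * (ext φ (y * y) * ext φ' (K * x)) ∧
    ext φ' (K * x) = ext φ' x + X * (ext φ (x * x) * ext φ' (y * K)) := by
  have e1 : K = 1 + X * (x * (y * K)) := by
    have : (1 - X * (x * y)) * K = K - X * (x * (y * K)) := by noncomm_ring
    rw [← hK, this]; abel
  have e2 : K = 1 + X * (K * x * y) := by
    have : K * (1 - X * (x * y)) = K - X * (K * x * y) := by
      rw [mul_sub, mul_one, ← mul_assoc K X, (commute_X K).eq]; simp only [mul_assoc]
    rw [← hK', this]; abel
  obtain ⟨L, hL⟩ : ∃ L, K = 1 + L := ⟨K - 1, by abel⟩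
  have hL1 : L = X * (x * (y + y * L)) := by
    have : 1 + L = 1 + X * (x * (y + y * L)) := by
      rw [← hL]; nth_rewrite 1 [e1]; rw [hL]; noncomm_ring
    exact add_left_cancel this
  have mL : ∀ N, ∀ n ≤ N, coeff n L ∈ Wd φ Alg true false := by
    intro N
    induction N with
    | zero =>
      intro n hn
      obtain rfl : n = 0 := by omega
      rw [hL1]; simp
    | succ N ih =>
      intro n hn
      rcases n with _ | n
      · rw [hL1]; simp
      · rw [hL1, coeff_succ_X_mul]
        refine coeff_mul_mem_s16 (Cen φ Alg true) (Wd φ Alg false true) _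
          (fun c hc d hd => wd_cons (i := false) (e := true) hc hd) (N := N) (fun k _ => hx k)
          ?_ n (by omega)
        intro k hk
        rw [map_add]
        refine add_mem (wd_of_cen (hy k)) ?_
        exact coeff_mul_mem_s16 (Cen φ Alg false) (Wd φ Alg true false) _
          (fun c hc d hd => wd_cons (i := true) (e := false) hc hd) (fun k _ => hy k) ih k hk
  have mL' : ∀ n, coeff n L ∈ Wd φ Alg true false := fun n => mL n n le_rfl
  have mU : ∀ n, coeff n (y * K) ∈ Wd φ Alg false true := by
    intro n
    rw [hL, mul_add, mul_one, map_add]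
    refine add_mem (wd_of_cen (hy n)) ?_
    exact coeff_mul_mem_s16 (Cen φ Alg false) (Wd φ Alg true false) _
      (fun c hc d hd => wd_cons (i := true) (e := false) hc hd) (fun k _ => hy k)
      (fun k _ => mL' k) n le_rfl
  have mV : ∀ n, coeff n (K * x) ∈ Wd φ Alg true true := by
    intro n
    rw [hL, add_mul, one_mul, map_add]
    refine add_mem (wd_of_cen (hx n)) ?_
    exact coeff_mul_mem_s16 (Wd φ Alg true false) (Cen φ Alg true) _
      (fun c hc d hd => wd_snoc (i := true) (e := false) hd hc) (fun k _ => mL' k)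
      (fun k _ => hx k) n le_rfl
  have mY : ∀ n, coeff n (y * K * x) ∈ Wd φ Alg false false := by
    intro n
    exact coeff_mul_mem_s16 (Wd φ Alg false true) (Cen φ Alg true) _
      (fun c hc d hd => wd_snoc (i := false) (e := true) hd hc) (fun k _ => mU k)
      (fun k _ => hx k) n le_rfl
  have z : ∀ (u : PowerSeries B) (i e : Bool), (∀ n, coeff n u ∈ Wd φ Alg i e) → ext φ u = 0 := by
    intro u i e hu
    ext n; rw [coeff_ext, wd_phi h (hu n)]; simp
  have z' : ∀ (u : PowerSeries B) (i : Bool), (∀ n, coeff n u ∈ Wd φ Alg i false) →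
      ext φ' u = 0 := by
    intro u i hu
    ext n; rw [coeff_ext, wd_phi' h (hu n)]; simp
  refine ⟨?_, z _ _ _ mU, z _ _ _ mV, z _ _ _ mY, ?_, z' _ _ mY, ?_, ?_⟩
  · rw [hL, ext_add, z _ _ _ mL', ext_one, hφ1]; simp
  · rw [hL, ext_add, z' _ _ mL', ext_one, hφ'1]; simp
  · have : y * K = y + X * (y * (K * x) * y) := by
      nth_rewrite 1 [e2]
      rw [mul_add, mul_one, ← mul_assoc y X, (commute_X y).eq]; simp only [mul_assoc]
    nth_rewrite 1 [this]
    rw [ext_add, ext_X, ext_wrap h (i := true) hy hy mV]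
  · have : K * x = x + X * (x * (y * K) * x) := by
      nth_rewrite 1 [e1]
      rw [add_mul, one_mul]; simp only [mul_assoc]
    nth_rewrite 1 [this]
    rw [ext_add, ext_X, ext_wrap h (i := false) hx hx mU]

end Final

section FinalAlgebra

open PowerSeries

theorem final_algebra (w₁ w₂ g₁ g₂ p q u v M D T : PowerSeries ℂ)
    (hw₁ : w₁ = X * g₂) (hw₂ : w₂ = X * g₁)
    (hdp : derivative ℂ g₁ = derivative ℂ w₁ * p)
    (hdq : derivative ℂ g₂ = derivative ℂ w₂ * q)
    (hu : u = -(w₂ * q) + X * (q * v)) (hv : v = -(w₁ * p) + X * (p * u))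
    (hM : (1 - w₁ * g₁) * M = 1) (hD : (1 - w₁ * g₁) * D = w₂ * u + w₁ * v)
    (hT : T * M = derivative ℂ (X * M)) : D = M - T := by
  have dX : derivative ℂ (X : PowerSeries ℂ) = 1 := derivative_X
  have d1 : derivative ℂ w₁ = g₂ + X * derivative ℂ g₂ := by
    conv_lhs => rw [hw₁]
    simp only [Derivation.leibniz, smul_eq_mul, dX]; ring
  have d2 : derivative ℂ w₂ = g₁ + X * derivative ℂ g₁ := by
    conv_lhs => rw [hw₂]
    simp only [Derivation.leibniz, smul_eq_mul, dX]; ring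
  have dM : (1 - w₁ * g₁) * derivative ℂ M =
      M * (derivative ℂ w₁ * g₁ + w₁ * derivative ℂ g₁) := by
    have := congrArg (derivative ℂ) hM
    simp only [Derivation.leibniz, smul_eq_mul, map_sub, Derivation.map_one_eq_zero] at this
    linear_combination this
  have dXM : derivative ℂ (X * M) = M + X * derivative ℂ M := by
    simp only [Derivation.leibniz, smul_eq_mul, dX]; ring
  rw [dXM] at hT
  generalize derivative ℂ M = M' at *
  generalize derivative ℂ w₁ = w₁' at *
  generalize derivative ℂ w₂ = w₂' at *
  rw [hdp] at d2 dM
  rw [hdq] at d1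
  have hne : (1 - X * X * (p * q) : PowerSeries ℂ) ≠ 0 := by
    intro h
    have := congrArg constantCoeff h
    simp at this
  have hu' : u = -(X * q * w₂') := by
    apply mul_left_cancel₀ hne
    linear_combination hu + X * q * hv - q * hw₂ + X * q * (- p * hw₁) + X * q * d2 + X * X * p * q * d1
  have hv' : v = -(X * p * w₁') := by
    rw [hv, hu', hw₁, d1]; ring
  have hTe : T = (1 - w₁ * g₁) * (M + X * M') := by
    linear_combination (1 - w₁ * g₁) * hT - T * hM
  have hDe : D = M * (w₂ * u + w₁ * v) := by
    linear_combination M * hD - D * hM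
  rw [hDe, hTe, hu', hv']
  linear_combination X * dM + M * g₁ * X * d1 - M * g₁ * hw₁ - M * X * q * w₂' * hw₂

end FinalAlgebra

theorem statement16
    {B : Type*} [Ring B] [Algebra ℂ B]
    (φ φ' : B →ₗ[ℂ] ℂ) (hφ1 : φ 1 = 1) (hφ'1 : φ' 1 = 0)
    (b₁ b₂ : B)
    (hinf : IsInfFree ⇑φ ⇑φ' (fun i : Bool =>
      if i then (Algebra.adjoin ℂ {b₁} : Set B)
      else (Algebra.adjoin ℂ {b₂} : Set B)))
    (t₁ t₂ t : ℕ → ℂ)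
    (ht₁ : IsInvMK (fun n => φ (b₁ ^ n)) t₁)
    (ht₂ : IsInvMK (fun n => φ (b₂ ^ n)) t₂)
    (hb₁ : ∀ n : ℕ, 0 < n → φ' (b₁ ^ n) = φ (b₁ ^ n) - t₁ n)
    (hb₂ : ∀ n : ℕ, 0 < n → φ' (b₂ ^ n) = φ (b₂ ^ n) - t₂ n)
    (ht : IsInvMK (fun n => φ ((b₁ * b₂) ^ n)) t) :
    ∀ n : ℕ, 0 < n → φ' ((b₁ * b₂) ^ n) = φ ((b₁ * b₂) ^ n) - t n := by
  obtain ⟨Alg, hAlg⟩ : ∃ Alg : Bool → Set B, Alg = fun i : Bool =>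
      if i then (Algebra.adjoin ℂ {b₁} : Set B) else (Algebra.adjoin ℂ {b₂} : Set B) := ⟨_, rfl⟩
  rw [← hAlg] at hinf
  have hAlg₁ : Alg true = (Algebra.adjoin ℂ {b₁} : Set B) := by rw [hAlg]; simp
  have hAlg₂ : Alg false = (Algebra.adjoin ℂ {b₂} : Set B) := by rw [hAlg]; simp
  clear hAlg
  obtain ⟨f₁, x₁, m₁, z₁, p₁, d₁, A₁, A₁'⟩ := single φ φ' hφ1 hφ'1 b₁ t₁ ht₁ hb₁
  obtain ⟨f₂, x₂, m₂, z₂, p₂, d₂, A₂, A₂'⟩ := single φ φ' hφ1 hφ'1 b₂ t₂ ht₂ hb₂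
  obtain ⟨w₁, w₂, hw₁, hw₂⟩ := exists_omega f₁ f₂
  have c₁ : PowerSeries.constantCoeff w₁ = 0 := by rw [hw₁]; simp
  have c₂ : PowerSeries.constantCoeff w₂ = 0 := by rw [hw₂]; simp
  obtain ⟨p, x, hx, hp, hpx, hdp, hA, hA', hxA, -⟩ :=
    single_sb φ φ' Alg true b₁ hAlg₁ f₁ x₁ m₁ z₁ p₁ d₁ A₁ A₁' w₁ c₁
  obtain ⟨q, y, hy, hq, hqy, hdq, hB, hB', -, hyB⟩ :=
    single_sb φ φ' Alg false b₂ hAlg₂ f₂ x₂ m₂ z₂ p₂ d₂ A₂ A₂' w₂ c₂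
  clear A₁ A₁' A₂ A₂' p₁ p₂ d₁ d₂ z₁ z₂ m₁ m₂
  generalize sb w₁ f₁ = g₁ at *
  generalize sb w₂ f₂ = g₂ at *
  -- the resolvent of `b₁ * b₂`
  have hinvη : (1 - w₁ * g₁) * (1 - w₁ * g₁)⁻¹ = 1 :=
    PowerSeries.mul_inv_cancel _ (by simp [c₁])
  have hH := geom_mul (b₁ * b₂)
  have hH' := geom_mul' (b₁ * b₂)
  have eM : ext φ (PowerSeries.mk fun n => (b₁ * b₂) ^ n) =
      PowerSeries.mk fun n => φ ((b₁ * b₂) ^ n) := by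
    ext n; simp [coeff_ext]
  have eT := invMK_series ht
  have goal' : ext φ' (PowerSeries.mk fun n => (b₁ * b₂) ^ n) =
      ext φ (PowerSeries.mk fun n => (b₁ * b₂) ^ n) - PowerSeries.mk t →
      ∀ n : ℕ, 0 < n → φ' ((b₁ * b₂) ^ n) = φ ((b₁ * b₂) ^ n) - t n := by
    intro h n _
    have := congrArg (PowerSeries.coeff n) h
    simpa [coeff_ext] using this
  apply goal'
  rw [← eM] at eT
  clear goal' eM ht
  generalize (PowerSeries.mk fun n => (b₁ * b₂) ^ n) = H at *
  generalize PowerSeries.mk t = T at *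
  rw [map_mul, ← sc_X] at hH hH'
  obtain ⟨K, hK, hK', hKH⟩ := resolvent_hom (sc B) sc_comm PowerSeries.X w₁ w₂ g₁ g₂ _
    (PowerSeries.C b₁) (PowerSeries.C b₂) x y H hw₁ hw₂ hA hA' hB hB' hxA hyB hinvη hH hH'
  rw [sc_X] at hK hK'
  obtain ⟨k1, k2, k3, k4, k5, k6, k7, k8⟩ := resolvent_eval hinf hφ1 hφ'1 x y K hx hy hK hK'
  have expand : (1 + sc B w₂ * y) * K * (1 + sc B w₁ * x) =
      K + sc B w₂ * (y * K) + sc B w₁ * (K * x) + sc B (w₁ * w₂) * (y * K * x) := by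
    have e1 : K * (sc B w₁ * x) = sc B w₁ * (K * x) := by
      rw [← mul_assoc, ← sc_comm, mul_assoc]
    have e2 : sc B w₂ * y * K * (sc B w₁ * x) = sc B (w₁ * w₂) * (y * K * x) := by
      rw [← mul_assoc, ← sc_comm, map_mul]; simp only [mul_assoc]
    rw [mul_add, mul_one, add_mul, one_mul, add_mul, e1, e2]
    simp only [mul_assoc]
    abel
  rw [expand] at hKH
  have F := congrArg (ext φ) hKH
  have F' := congrArg (ext φ') hKH
  simp only [ext_add, ext_sc, k1, k2, k3, k4, k5, k6] at F F'
  rw [hq, hqy] at k7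
  rw [hp, hpx] at k8
  generalize ext φ' (y * K) = u at *
  generalize ext φ' (K * x) = v at *
  generalize ext φ H = M at *
  generalize ext φ' H = D at *
  exact final_algebra w₁ w₂ g₁ g₂ p q u v M D T hw₁ hw₂ hdp hdq k7 k8
    (by linear_combination -F) (by linear_combination -F') eT

end TypeBPrime
end
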